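/- Uniform Hölder estimate for the Dirichlet Laplacian on a sector: Let 0 < β < 1/2 and 0 < α < 1. Let f : Ω̄_β → ℝ with ‖f‖_{C^α(Ω̄_β)} < ∞, and let Ψ be the unique function that is continuous on Ω̄_β, twice continuously differentiable on Ω_β, satisfies ∂_{x₁x₁}Ψ + ∂_{x₂x₂}Ψ = f on Ω_β, Ψ = 0 on ∂Ω_β, and |Ψ(x)| ≤ C|x|² ln(e+|x|) for some constant C. Then, for a constant C = C(α,β) > 0: (i) |∇²Ψ(x)| ≤ C ln(2 + |x|) ‖f‖_{L^∞(Ω_β)} + C ‖f‖_{C^α(Ω̄_β)} for all x ∈ Ω_β; (ii) if in addition 0 < α < 1/β − 2, then sup_{x≠y∈Ω_β} |∇²Ψ(x) − ∇²Ψ(y)| / |x−y|^α ≤ C ‖f‖_{C^α(Ω̄_β)}. -/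

import Mathlib

open Set Complex
open scoped ENNReal NNReal Real

noncomputable section

/-- The open sector `Ω_β = { r e^{iθ} : r > 0, 0 < θ < βπ }` in `ℂ ≅ ℝ²`. -/
def Sector (β : ℝ) : Set ℂ := {z | z ≠ 0 ∧ 0 < Complex.arg z ∧ Complex.arg z < β * π}

/-- The Laplacian `ΔΨ = ∂_{x₁x₁}Ψ + ∂_{x₂x₂}Ψ` of a function `Ψ : ℂ → ℝ`. -/
def lap (Ψ : ℂ → ℝ) (z : ℂ) : ℝ :=
  fderiv ℝ (fun w => fderiv ℝ Ψ w 1) z 1 +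
    fderiv ℝ (fun w => fderiv ℝ Ψ w Complex.I) z Complex.I

/-- Second partial derivative of `Ψ` in the directions `v₁, v₂ ∈ {1, i}` (an entry of the
Hessian `∇²Ψ`). -/
def hess (Ψ : ℂ → ℝ) (v₁ v₂ : ℂ) (z : ℂ) : ℝ :=
  fderiv ℝ (fun w => fderiv ℝ Ψ w v₁) z v₂

/-- Sup-norm `‖f‖_{L^∞(D)}` of `f : ℂ → ℝ`, valued in `ℝ≥0∞`. -/
def supNormC (D : Set ℂ) (f : ℂ → ℝ) : ℝ≥0∞ := ⨆ z : D, (‖f (z : ℂ)‖₊ : ℝ≥0∞)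

/-- The scale-invariant Hölder norm `‖f‖_{∘C^α(D)}`, valued in `ℝ≥0∞`:
`sup_D |f| + sup_{z ≠ z'} | |z|^α f(z) - |z'|^α f(z') | / |z-z'|^α`. -/
def ringNormC (α : ℝ) (D : Set ℂ) (f : ℂ → ℝ) : ℝ≥0∞ :=
  supNormC D f +
    ⨆ p : {q : D × D // (q.1 : ℂ) ≠ (q.2 : ℂ)},
      (‖(‖(p.1.1 : ℂ)‖ ^ α) * f (p.1.1 : ℂ) - (‖(p.1.2 : ℂ)‖ ^ α) * f (p.1.2 : ℂ)‖₊ : ℝ≥0∞) /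
        ENNReal.ofReal (‖(p.1.1 : ℂ) - (p.1.2 : ℂ)‖ ^ α)

/-- The Hölder seminorm `sup_{z ≠ z'} |f(z) - f(z')| / |z-z'|^α`, valued in `ℝ≥0∞`. -/
def holderSemiC (α : ℝ) (D : Set ℂ) (f : ℂ → ℝ) : ℝ≥0∞ :=
  ⨆ p : {q : D × D // (q.1 : ℂ) ≠ (q.2 : ℂ)},
    (‖f (p.1.1 : ℂ) - f (p.1.2 : ℂ)‖₊ : ℝ≥0∞) /
      ENNReal.ofReal (‖(p.1.1 : ℂ) - (p.1.2 : ℂ)‖ ^ α)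

/-- The uniform Hölder norm `‖f‖_{C^α(D)} = sup_D |f| + Hölder seminorm`. -/
def unifNormC (α : ℝ) (D : Set ℂ) (f : ℂ → ℝ) : ℝ≥0∞ :=
  supNormC D f + holderSemiC α D f

namespace SectorSchauder

open Filter Topology Polynomial Metric

/-! ### Harmonic polynomials -/

/-- One Schwarz-type step: dividing out the constant term of a bounded polynomial. -/
lemma norm_eval_divX_le {P : ℂ[X]} {ρ M : ℝ} (h : ∀ z ∈ ball (0 : ℂ) ρ, ‖P.eval z - P.eval 0‖ ≤ M)
    {z : ℂ} (hz : z ∈ ball (0 : ℂ) ρ) : ‖P.divX.eval z‖ ≤ M / ρ := by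
  have hd : DifferentiableOn ℂ (fun w => P.eval w) (ball 0 ρ) := P.differentiable.differentiableOn
  have key : ∀ w : ℂ, P.eval w - P.eval 0 = w * P.divX.eval w := by
    intro w
    conv_lhs => rw [← P.divX_mul_X_add]
    simp
    ring
  have hm : MapsTo (fun w => P.eval w) (ball 0 ρ) (closedBall ((fun w => P.eval w) 0) M) := by
    intro w hw
    rw [mem_closedBall, dist_eq_norm]
    exact h w hw
  have h1 := norm_dslope_le_div_of_mapsTo_ball hd hm hz
  rcases eq_or_ne z 0 with rfl | hz0
  · have : deriv (fun w => P.eval w) 0 = P.divX.eval 0 := by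
      have : HasDerivAt (fun w => P.eval w) (P.divX.eval 0) 0 := by
        have e : (fun w => P.eval w) = fun w => w * P.divX.eval w + P.eval 0 := by
          funext w
          rw [← key]
          ring
        rw [e]
        have := (((hasDerivAt_id (0 : ℂ)).mul (P.divX.hasDerivAt 0)).add_const (P.eval 0))
        simpa using this
      exact this.deriv
    rw [dslope_same, this] at h1
    exact h1
  · rw [dslope_of_ne _ hz0, slope_def_field, key z] at h1
    simpa [hz0] using h1

/-- A polynomial with its first three coefficients removed. -/
def tail3 (P : ℂ[X]) : ℂ[X] := P.divX.divX.divX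

lemma tail3_add (P Q : ℂ[X]) : tail3 (P + Q) = tail3 P + tail3 Q := by
  simp [tail3, divX_add]

lemma eval_tail3 (P : ℂ[X]) (z : ℂ) :
    P.eval z = P.coeff 0 + P.coeff 1 * z + P.coeff 2 * z ^ 2 + z ^ 3 * (tail3 P).eval z := by
  have key : ∀ (P : ℂ[X]) (w : ℂ), P.eval w = P.coeff 0 + w * P.divX.eval w := by
    intro P w
    conv_lhs => rw [← P.divX_mul_X_add]
    simp
    ring
  rw [key P, key P.divX, key P.divX.divX]
  simp [coeff_divX, tail3]
  ring

lemma norm_eval_tail3_le {P : ℂ[X]} {r M : ℝ} (hr : 0 < r)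
    (h : ∀ z : ℂ, ‖z‖ ≤ r → |(P.eval z).re| ≤ M) {z : ℂ} (hz : z ∈ ball (0 : ℂ) (r / 2)) :
    ‖(tail3 P).eval z‖ ≤ 128 * M / r ^ 3 := by
  have step0 : ∀ M', M < M' → ∀ w ∈ ball (0 : ℂ) (r / 2), ‖P.eval w - P.eval 0‖ ≤ 4 * M' := by
    intro M' hM w hw
    have hM0 : 0 ≤ M := (abs_nonneg _).trans (h 0 (by simpa using hr.le))
    have hwr : ‖w‖ < r / 2 := by simpa using hw
    have hw' : w ∈ ball (0 : ℂ) r := by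
      rw [mem_ball_zero_iff]
      linarith
    have := borelCaratheodory_zero (f := fun w => P.eval w - P.eval 0) (M := 2 * M') (R := r)
      (by linarith) (by fun_prop) (fun y hy => by
        have h1 := abs_le.1 (h y (by simpa using (mem_ball_zero_iff.1 hy).le))
        have h2 := abs_le.1 (h 0 (by simpa using hr.le))
        simp only [mem_ofPred_eq, sub_re]
        linarith) hr hw' (by simp)
    refine this.trans ?_
    rw [div_le_iff₀ (by linarith)]
    nlinarith
  have step1 : ∀ w ∈ ball (0 : ℂ) (r / 2), ‖P.eval w - P.eval 0‖ ≤ 4 * M := by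
    intro w hw
    have : ‖P.eval w - P.eval 0‖ / 4 ≤ M := by
      refine le_of_forall_gt_imp_ge_of_dense fun M' hM' => ?_
      have := step0 M' hM' w hw
      linarith
    linarith
  have step : ∀ (Q : ℂ[X]) (N : ℝ), (∀ w ∈ ball (0 : ℂ) (r / 2), ‖Q.eval w‖ ≤ N) →
      ∀ w ∈ ball (0 : ℂ) (r / 2), ‖Q.divX.eval w‖ ≤ 4 * N / r := by
    intro Q N hN w hw
    refine (norm_eval_divX_le (ρ := r / 2) (M := 2 * N) (fun y hy => ?_) hw).trans (le_of_eq ?_)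
    · have h0 := hN 0 (by simpa using hr)
      have h1 := hN y hy
      linarith [norm_sub_le (Q.eval y) (Q.eval 0)]
    · field_simp
      ring
  have s1 : ∀ w ∈ ball (0 : ℂ) (r / 2), ‖P.divX.eval w‖ ≤ 8 * M / r := by
    intro w hw
    refine (norm_eval_divX_le step1 hw).trans (le_of_eq ?_)
    field_simp
    ring
  refine (step _ _ (step _ _ s1) z hz).trans (le_of_eq ?_)
  field_simp
  ring

/-! ### Approximation of continuous data on circles by harmonic polynomials -/

lemma exists_polynomial_re_near {g : ℂ → ℝ} {p : ℂ} {r : ℝ} (hr : 0 < r)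
    (hg : ContinuousOn g (sphere p r)) {ε : ℝ} (hε : 0 < ε) :
    ∃ P : ℂ[X], ∀ z ∈ sphere p r, |g z - (P.eval (z - p)).re| ≤ ε := by
  have : Fact (0 < 2 * π) := ⟨Real.two_pi_pos⟩
  let γ : AddCircle (2 * π) → ℂ := fun θ => p + r * (AddCircle.toCircle θ : ℂ)
  have hγc : Continuous γ := by
    have := AddCircle.continuous_toCircle (T := 2 * π)
    fun_prop
  have hγs : ∀ θ, γ θ ∈ sphere p r := by
    intro θ
    simp [γ, abs_of_pos hr, Circle.norm_coe]
  let G : C(AddCircle (2 * π), ℂ) :=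
    ⟨fun θ => ((g (γ θ) : ℝ) : ℂ), continuous_ofReal.comp (hg.comp_continuous hγc hγs)⟩
  have hG : G ∈ (Submodule.span ℂ (range <| @fourier (2 * π))).topologicalClosure := by
    rw [span_fourier_closure_eq_top]
    trivial
  rw [← SetLike.mem_coe, Submodule.topologicalClosure_coe, Metric.mem_closure_iff] at hG
  obtain ⟨F, hF, hFG⟩ := hG ε hε
  have claim : ∃ P Q : ℂ[X], ∀ θ : AddCircle (2 * π),
      F θ = P.eval (r * (AddCircle.toCircle θ : ℂ)) +
        (starRingEnd ℂ) (Q.eval (r * (AddCircle.toCircle θ : ℂ))) := by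
    clear hFG
    have hr' : (r : ℂ) ≠ 0 := by exact_mod_cast hr.ne'
    induction hF using Submodule.span_induction with
    | mem x hx =>
      obtain ⟨n, rfl⟩ := hx
      rcases Int.eq_nat_or_neg n with ⟨m, rfl | rfl⟩
      · refine ⟨C ((r : ℂ)⁻¹ ^ m) * X ^ m, 0, fun θ => ?_⟩
        simp [fourier_apply, AddCircle.toCircle_nsmul, mul_pow, hr']
      · refine ⟨0, C ((r : ℂ)⁻¹ ^ m) * X ^ m, fun θ => ?_⟩
        simp [fourier_apply, AddCircle.toCircle_nsmul, mul_pow, hr', AddCircle.toCircle_neg,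
          ← Circle.coe_inv_eq_conj]
    | zero => exact ⟨0, 0, by simp⟩
    | add x y _ _ hx hy =>
      obtain ⟨P, Q, h⟩ := hx
      obtain ⟨P', Q', h'⟩ := hy
      refine ⟨P + P', Q + Q', fun θ => ?_⟩
      simp [h, h']
      ring
    | smul a x _ hx =>
      obtain ⟨P, Q, h⟩ := hx
      refine ⟨C a * P, C ((starRingEnd ℂ) a) * Q, fun θ => ?_⟩
      simp [h]
      ring
  obtain ⟨P, Q, hPQ⟩ := claim
  refine ⟨P + Q, fun z hz => ?_⟩
  have hz' : ‖z - p‖ = r := by simpa [dist_eq_norm] using hz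
  obtain ⟨θ, hθ⟩ : ∃ θ : AddCircle (2 * π), (AddCircle.toCircle θ : ℂ) = (z - p) / r := by
    obtain ⟨θ, hθ⟩ := (AddCircle.homeomorphCircle (T := 2 * π) (by positivity)).surjective
      ⟨(z - p) / r, by simp [Submonoid.unitSphere, hz', abs_of_pos hr, hr.ne']⟩
    refine ⟨θ, ?_⟩
    rw [AddCircle.homeomorphCircle_apply] at hθ
    rw [hθ]
  have hr' : (r : ℂ) ≠ 0 := by exact_mod_cast hr.ne'
  have e1 : (r : ℂ) * (AddCircle.toCircle θ : ℂ) = z - p := by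
    rw [hθ]
    field_simp
  have e2 : γ θ = z := by simp [γ, e1]
  have h1 := (ContinuousMap.dist_apply_le_dist θ (f := G) (g := F)).trans hFG.le
  rw [dist_eq_norm, hPQ θ, e1] at h1
  have h2 : G θ = (g z : ℂ) := by simp [G, e2]
  rw [h2] at h1
  refine le_trans ?_ h1
  refine le_trans (le_of_eq ?_) (abs_re_le_norm _)
  simp

/-! ### A Campanato-type iteration -/

/-- If `V` is approximated by harmonic polynomials with error `K r ^ (2 + α)` on every ball
`B_r(p)`, `r ≤ R`, then quadratic harmonic polynomials suffice. -/
lemma exists_quadratic_of_harmonic_approx (α : ℝ) (hα1 : α < 1) (M : ℝ) (hM : 0 ≤ M) :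
    ∃ C : ℝ, 0 < C ∧ ∀ (V : ℂ → ℝ) (p : ℂ) (R K : ℝ), 0 < R → 0 < K →
      (∀ r, 0 < r → r ≤ R → ∃ P : ℂ[X], ∀ z, ‖z - p‖ ≤ r →
        |V z - (P.eval (z - p)).re| ≤ K * r ^ (2 + α)) →
      (∀ z, ‖z - p‖ ≤ R → |V z| ≤ M * K * R ^ (2 + α)) →
      ∀ r, 0 < r → r ≤ R → ∃ c₀ c₁ c₂ : ℂ, ∀ z, ‖z - p‖ ≤ r →
        |V z - (c₀ + c₁ * (z - p) + c₂ * (z - p) ^ 2).re| ≤ C * K * r ^ (2 + α) := by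
  set t : ℝ := (2 : ℝ) ^ (1 - α) with ht
  have ht1 : 1 < t := Real.one_lt_rpow (by norm_num) (by linarith)
  set A : ℝ := 128 * (M + 1) + 2048 * t / (t - 1) with hA
  have hApos : 0 < A := by
    have : 0 < 2048 * t / (t - 1) := div_pos (by linarith) (by linarith)
    positivity
  set s : ℝ := (6 : ℝ) ^ |2 + α| with hs
  have hspos : 1 ≤ s := Real.one_le_rpow (by norm_num) (abs_nonneg _)
  have hs6 : ∀ x, 1 ≤ x → x ≤ 6 → x ^ (2 + α) ≤ s := by
    intro x h1 h4
    calc x ^ (2 + α) ≤ x ^ |2 + α| := Real.rpow_le_rpow_of_exponent_le h1 (le_abs_self _)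
      _ ≤ s := Real.rpow_le_rpow (by linarith) h4 (abs_nonneg _)
  refine ⟨(1 + A + M) * s, by positivity, ?_⟩
  intro V p R K hR hK happ hV
  have hrk : ∀ k : ℕ, 0 < R / 2 ^ k := fun k => by positivity
  have hrkR : ∀ k : ℕ, R / 2 ^ k ≤ R := fun k =>
    div_le_self hR.le (one_le_pow₀ (by norm_num))
  have tail_bound : ∀ k : ℕ, ∀ P : ℂ[X],
      (∀ z, ‖z - p‖ ≤ R / 2 ^ k → |V z - (P.eval (z - p)).re| ≤ K * (R / 2 ^ k) ^ (2 + α)) →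
      ∀ z ∈ ball (0 : ℂ) (R / 2 ^ k / 2),
        ‖(tail3 P).eval z‖ ≤ A * K * (R / 2 ^ k) ^ (2 + α) / (R / 2 ^ k) ^ 3 := by
    intro k
    induction k with
    | zero =>
      intro P hP z hz
      simp only [pow_zero, div_one] at hP hz ⊢
      have hb : ∀ w : ℂ, ‖w‖ ≤ R → |(P.eval w).re| ≤ (M + 1) * K * R ^ (2 + α) := by
        intro w hw
        have h1 := hP (w + p) (by simpa using hw)
        have h2 := hV (w + p) (by simpa using hw)
        rw [add_sub_cancel_right] at h1
        rw [abs_le] at h1 h2 ⊢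
        constructor <;> linarith
      refine (norm_eval_tail3_le hR hb hz).trans ?_
      gcongr ?_ / _
      have h3 : 0 ≤ K * R ^ (2 + α) := by positivity
      have h4 : 128 * (M + 1) ≤ A := by
        have : 0 < 2048 * t / (t - 1) := div_pos (by linarith) (by linarith)
        linarith
      nlinarith
    | succ k ih =>
      intro P hP z hz
      set ρ := R / 2 ^ (k + 1) with hρ
      have hρ0 : 0 < ρ := hrk _
      have e : R / 2 ^ k = 2 * ρ := by
        rw [hρ, pow_succ]
        field_simp
      obtain ⟨Q, hQ⟩ := happ (R / 2 ^ k) (hrk k) (hrkR k)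
      have hQt := ih Q hQ
      rw [e] at hQ hQt
      have h2 : (2 * ρ) ^ (2 + α) = 8 / t * ρ ^ (2 + α) := by
        rw [Real.mul_rpow (by norm_num) hρ0.le, ht]
        congr 1
        rw [eq_div_iff (by positivity), ← Real.rpow_add (by norm_num)]
        ring_nf
        norm_num
      have hsum : ∀ w : ℂ, ‖w‖ ≤ ρ → |((P - Q).eval w).re| ≤ 16 * K * ρ ^ (2 + α) := by
        intro w hw
        have h1 := hP (w + p) (by simpa using hw)
        have h3 := hQ (w + p) (by simpa using hw.trans (by linarith))
        rw [add_sub_cancel_right] at h1 h3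
        rw [h2] at h3
        have h4 : 8 / t * ρ ^ (2 + α) ≤ 8 * ρ ^ (2 + α) := by
          gcongr
          exact div_le_self (by norm_num) ht1.le
        have h5 : K * (8 / t * ρ ^ (2 + α)) ≤ K * (8 * ρ ^ (2 + α)) := by gcongr
        have h6 : 0 ≤ K * ρ ^ (2 + α) := by positivity
        rw [eval_sub, sub_re]
        rw [abs_le] at h1 h3 ⊢
        constructor <;> linarith
      have hd := norm_eval_tail3_le hρ0 hsum hz
      have hz2 : z ∈ ball (0 : ℂ) (2 * ρ / 2) := by
        rw [mem_ball_zero_iff] at hz ⊢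
        linarith
      have hq := hQt z hz2
      have eP : (tail3 P).eval z = (tail3 (P - Q)).eval z + (tail3 Q).eval z := by
        rw [← eval_add, ← tail3_add, sub_add_cancel]
      rw [eP]
      refine (norm_add_le _ _).trans ((add_le_add hd hq).trans ?_)
      rw [h2]
      have : A * K * (8 / t * ρ ^ (2 + α)) / (2 * ρ) ^ 3 = (A / t) * K * ρ ^ (2 + α) / ρ ^ 3 := by
        field_simp
        ring
      rw [this, ← add_div]
      gcongr ?_ / _
      have h7 : 2048 + A / t ≤ A := by
        have : A - A / t = A * (t - 1) / t := by field_simp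
        have h8 : 2048 ≤ A * (t - 1) / t := by
          rw [le_div_iff₀ (by linarith), hA, add_mul, div_mul_cancel₀ _ (by linarith)]
          have : 0 ≤ 128 * (M + 1) * (t - 1) := mul_nonneg (by positivity) (by linarith)
          linarith
        linarith
      have h6 : 0 ≤ K * ρ ^ (2 + α) := by positivity
      nlinarith
  intro r hr hrR
  have hKr : 0 < K * r ^ (2 + α) := by positivity
  rcases lt_or_ge (R / 3) r with hr2 | hr2
  · refine ⟨0, 0, 0, fun z hz => ?_⟩
    have h1 := hV z (hz.trans hrR)
    have h2 : R ^ (2 + α) ≤ s * r ^ (2 + α) := by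
      have h3 := hs6 (R / r) (by rwa [le_div_iff₀ hr, one_mul])
        (by rw [div_le_iff₀ hr]; linarith)
      rwa [Real.div_rpow hR.le hr.le, div_le_iff₀ (by positivity)] at h3
    simp only [zero_mul, add_zero, zero_re, sub_zero]
    refine h1.trans ?_
    calc M * K * R ^ (2 + α) ≤ M * K * (s * r ^ (2 + α)) := by gcongr
      _ ≤ (1 + A + M) * s * K * r ^ (2 + α) := by
        have : 0 ≤ (1 + A) * (s * (K * r ^ (2 + α))) := by positivity
        linarith
  · obtain ⟨k, hk1, hk2⟩ := exists_nat_pow_near (x := R / (3 * r)) (y := 2)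
      (by rw [le_div_iff₀ (by positivity)]; linarith) (by norm_num)
    set ρ := R / 2 ^ k with hρ
    have hρ0 : 0 < ρ := hrk _
    have hρ1 : 3 * r ≤ ρ := by
      rw [le_div_iff₀ (by positivity)] at hk1 ⊢
      linarith
    have hρ2 : ρ < 6 * r := by
      rw [div_lt_iff₀ (by positivity)] at hk2 ⊢
      rw [pow_succ] at hk2
      linarith
    obtain ⟨P, hP⟩ := happ ρ hρ0 (hrkR k)
    have hPt := tail_bound k P hP
    refine ⟨P.coeff 0, P.coeff 1, P.coeff 2, ?_⟩
    have hρs : ρ ^ (2 + α) ≤ s * r ^ (2 + α) := by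
      have h3 := hs6 (ρ / r) (by rw [le_div_iff₀ hr]; linarith)
        (by rw [div_le_iff₀ hr]; linarith)
      rwa [Real.div_rpow hρ0.le hr.le, div_le_iff₀ (by positivity)] at h3
    intro z hz
    have hz1 := hP z (by linarith)
    have bound : ∀ w : ℂ, ‖w‖ < ρ / 2 → ‖w ^ 3 * (tail3 P).eval w‖ ≤ A * K * ρ ^ (2 + α) := by
      intro w hw
      have h1 := hPt w (by simpa using hw)
      rw [norm_mul, norm_pow]
      calc ‖w‖ ^ 3 * ‖(tail3 P).eval w‖ ≤ ρ ^ 3 * (A * K * ρ ^ (2 + α) / ρ ^ 3) := by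
            gcongr
            linarith
        _ = A * K * ρ ^ (2 + α) := by field_simp
    have hz2 := (abs_re_le_norm _).trans (bound (z - p) (by linarith))
    rw [eval_tail3, add_re] at hz1
    have hz3 : |V z - (P.coeff 0 + P.coeff 1 * (z - p) + P.coeff 2 * (z - p) ^ 2).re| ≤
        (1 + A) * K * ρ ^ (2 + α) := by
      rw [abs_le] at hz1 hz2 ⊢
      constructor <;> linarith
    refine hz3.trans ?_
    calc (1 + A) * K * ρ ^ (2 + α) ≤ (1 + A) * K * (s * r ^ (2 + α)) := by gcongr
      _ ≤ (1 + A + M) * s * K * r ^ (2 + α) := by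
        have : 0 ≤ M * (s * (K * r ^ (2 + α))) := by positivity
        linarith

/-! ### Second differences and the pointwise Laplacian -/

/-- The second symmetric difference quotient of `w` at `z` in direction `v` tends to `ℓ`. -/
def HasSD (w : ℂ → ℝ) (z v : ℂ) (ℓ : ℝ) : Prop :=
  Tendsto (fun t : ℝ => (w (z + t * v) + w (z - t * v) - 2 * w z) / t ^ 2) (𝓝[>] 0) (𝓝 ℓ)

/-- The five-point Laplacian of `w` at `z` tends to `L` in every orthonormal frame. -/
def HasLap (w : ℂ → ℝ) (z : ℂ) (L : ℝ) : Prop :=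
  ∀ v : ℂ, ‖v‖ = 1 → Tendsto (fun t : ℝ => (w (z + t * v) + w (z - t * v) +
    w (z + t * (I * v)) + w (z - t * (I * v)) - 4 * w z) / t ^ 2) (𝓝[>] 0) (𝓝 L)

lemma HasLap.add {w₁ w₂ : ℂ → ℝ} {z : ℂ} {a b : ℝ} (h₁ : HasLap w₁ z a) (h₂ : HasLap w₂ z b) :
    HasLap (fun z => w₁ z + w₂ z) z (a + b) := fun v hv =>
  ((h₁ v hv).add (h₂ v hv)).congr fun t => by ring

lemma HasLap.const_mul {w : ℂ → ℝ} {z : ℂ} {a : ℝ} (c : ℝ) (h : HasLap w z a) :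
    HasLap (fun z => c * w z) z (c * a) := fun v hv =>
  ((h v hv).const_mul c).congr fun t => by ring

lemma HasLap.neg {w : ℂ → ℝ} {z : ℂ} {a : ℝ} (h : HasLap w z a) :
    HasLap (fun z => -w z) z (-a) := fun v hv =>
  ((h v hv).neg).congr fun t => by ring

lemma HasLap.sub {w₁ w₂ : ℂ → ℝ} {z : ℂ} {a b : ℝ} (h₁ : HasLap w₁ z a) (h₂ : HasLap w₂ z b) :
    HasLap (fun z => w₁ z - w₂ z) z (a - b) := fun v hv =>
  ((h₁ v hv).sub (h₂ v hv)).congr fun t => by ring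

lemma HasLap.reflect {w : ℂ → ℝ} {z e : ℂ} {L : ℝ} (he : ‖e‖ = 1)
    (h : HasLap w (e * (starRingEnd ℂ) z) L) :
    HasLap (fun z => w (e * (starRingEnd ℂ) z)) z L := by
  intro v hv
  refine (h (e * (starRingEnd ℂ) v) (by simp [he, hv])).congr fun t => ?_
  have e1 : e * (starRingEnd ℂ) z + t * (e * (starRingEnd ℂ) v) =
      e * (starRingEnd ℂ) (z + t * v) := by simp; ring
  have e2 : e * (starRingEnd ℂ) z - t * (e * (starRingEnd ℂ) v) =
      e * (starRingEnd ℂ) (z - t * v) := by simp; ring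
  have e3 : e * (starRingEnd ℂ) z + t * (I * (e * (starRingEnd ℂ) v)) =
      e * (starRingEnd ℂ) (z - t * (I * v)) := by simp; ring
  have e4 : e * (starRingEnd ℂ) z - t * (I * (e * (starRingEnd ℂ) v)) =
      e * (starRingEnd ℂ) (z + t * (I * v)) := by simp; ring
  rw [e1, e2, e3, e4]
  ring

lemma hasLap_of_hasSD {w : ℂ → ℝ} {z : ℂ} {L : ℝ}
    (h : ∀ v : ℂ, ‖v‖ = 1 → ∃ a b, HasSD w z v a ∧ HasSD w z (I * v) b ∧ a + b = L) :
    HasLap w z L := by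
  intro v hv
  obtain ⟨a, b, ha, hb, rfl⟩ := h v hv
  exact (ha.add hb).congr fun t => by ring

/-- At a local maximum the pointwise Laplacian is nonpositive. -/
lemma HasLap.nonpos_of_isLocalMax {w : ℂ → ℝ} {z : ℂ} {L : ℝ} (h : HasLap w z L)
    (hm : IsLocalMax w z) : L ≤ 0 := by
  refine le_of_tendsto (h 1 (by simp)) ?_
  have key : ∀ c : ℂ, ∀ᶠ t : ℝ in 𝓝[>] 0, w (z + t * c) ≤ w z := by
    intro c
    have hc : Tendsto (fun t : ℝ => z + t * c) (𝓝[>] 0) (𝓝 z) := by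
      have : Continuous fun t : ℝ => z + t * c := by fun_prop
      simpa using (this.tendsto 0).mono_left nhdsWithin_le_nhds
    exact hc.eventually hm
  filter_upwards [key 1, key (-1), key (I * 1), key (-(I * 1))] with t h1 h2 h3 h4
  simp only [mul_neg, ← sub_eq_add_neg] at h2 h4
  exact div_nonpos_of_nonpos_of_nonneg (by linarith) (sq_nonneg t)

lemma tendsto_secondDiff {g g' : ℝ → ℝ} {ℓ : ℝ} (h : ∀ᶠ t in 𝓝 0, HasDerivAt g (g' t) t)
    (h' : HasDerivAt g' ℓ 0) :
    Tendsto (fun t : ℝ => (g t + g (-t) - 2 * g 0) / t ^ 2) (𝓝[>] 0) (𝓝 ℓ) := by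
  have hneg : Tendsto (fun t : ℝ => -t) (𝓝 0) (𝓝 0) := by
    simpa using (continuous_neg (G := ℝ)).tendsto 0
  have h2 : ∀ᶠ t in 𝓝 (0 : ℝ), HasDerivAt g (g' (-t)) (-t) := hneg.eventually h
  have hc : ContinuousAt g 0 := h.self_of_nhds.continuousAt
  refine HasDerivAt.lhopital_zero_nhdsGT (f' := fun t => g' t - g' (-t)) (g' := fun t => 2 * t)
    ?_ ?_ ?_ ?_ ?_ ?_
  · refine Filter.Eventually.filter_mono nhdsWithin_le_nhds ?_
    filter_upwards [h, h2] with t ht1 ht2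
    have := (ht1.add (ht2.comp t (hasDerivAt_neg t))).sub_const (2 * g 0)
    convert! this using 1
    ring
  · exact Eventually.of_forall fun t => by simpa using hasDerivAt_pow 2 t
  · filter_upwards [self_mem_nhdsWithin] with t ht
    exact (mul_pos two_pos ht).ne'
  · refine Tendsto.mono_left ?_ nhdsWithin_le_nhds
    have : Tendsto (fun t => g t + g (-t) - 2 * g 0) (𝓝 0) (𝓝 (g 0 + g 0 - 2 * g 0)) :=
      (hc.tendsto.add (hc.tendsto.comp hneg)).sub_const _
    convert! this using 2
    ring
  · refine Tendsto.mono_left ?_ nhdsWithin_le_nhds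
    simpa using (continuous_pow (M := ℝ) 2).tendsto 0
  · have hs : Tendsto (fun t => t⁻¹ • (g' (0 + t) - g' 0)) (𝓝[≠] 0) (𝓝 ℓ) :=
      hasDerivAt_iff_tendsto_slope_zero.1 h'
    have hs1 := hs.mono_left (nhdsWithin_mono (0 : ℝ) (fun t (ht : t ∈ Ioi (0 : ℝ)) => ne_of_gt ht))
    have hn : Tendsto (fun t : ℝ => -t) (𝓝[>] 0) (𝓝[≠] 0) := by
      refine tendsto_nhdsWithin_iff.2 ⟨hneg.mono_left nhdsWithin_le_nhds, ?_⟩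
      filter_upwards [self_mem_nhdsWithin] with t ht
      simpa using ne_of_gt ht
    have hs2 := hs.comp hn
    have := (hs1.add hs2).div_const 2
    rw [add_self_div_two] at this
    refine this.congr' ?_
    filter_upwards [self_mem_nhdsWithin] with t ht
    have : t ≠ 0 := ne_of_gt ht
    simp only [Function.comp, smul_eq_mul, zero_add]
    field_simp
    ring

lemma hasSD_of_line {w : ℂ → ℝ} {z v : ℂ} {g' : ℝ → ℝ} {ℓ : ℝ}
    (h : ∀ᶠ t : ℝ in 𝓝 0, HasDerivAt (fun t : ℝ => w (z + t * v)) (g' t) t)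
    (h' : HasDerivAt g' ℓ 0) : HasSD w z v ℓ := by
  refine (tendsto_secondDiff h h').congr fun t => ?_
  simp [sub_eq_add_neg]

/-- Derivative of `t ↦ F (z + t v)` along a real line. -/
lemma hasDerivAt_line {F : ℂ → ℂ} {F' z v : ℂ} {t : ℝ} (h : HasDerivAt F F' (z + t * v)) :
    HasDerivAt (fun t : ℝ => F (z + t * v)) (F' * v) t := by
  have h1 : HasDerivAt (fun s : ℂ => z + s * v) v t := by
    simpa using ((hasDerivAt_id (t : ℂ)).mul_const v).const_add z
  exact (h.comp (t : ℂ) h1).comp_ofReal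

lemma _root_.HasDerivAt.re_line {F : ℝ → ℂ} {F' : ℂ} {t : ℝ} (h : HasDerivAt F F' t) :
    HasDerivAt (fun t : ℝ => (F t).re) F'.re t :=
  reCLM.hasFDerivAt.comp_hasDerivAt t h

lemma tendsto_line (z v : ℂ) : Tendsto (fun t : ℝ => z + t * v) (𝓝 0) (𝓝 z) := by
  have : Continuous fun t : ℝ => z + t * v := by fun_prop
  simpa using this.tendsto 0

lemma hasLap_re {F F' : ℂ → ℂ} {F'' z : ℂ} (h : ∀ᶠ w in 𝓝 z, HasDerivAt F (F' w) w)
    (h' : HasDerivAt F' F'' z) : HasLap (fun w => (F w).re) z 0 := by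
  have key : ∀ v : ℂ, HasSD (fun w => (F w).re) z v (F'' * v * v).re := by
    intro v
    refine hasSD_of_line (g' := fun t => (F' (z + t * v) * v).re) ?_ ?_
    · filter_upwards [(tendsto_line z v).eventually h] with t ht
      exact (hasDerivAt_line ht).re_line
    · exact ((hasDerivAt_line (t := 0) (by simpa using h')).mul_const v).re_line
  refine hasLap_of_hasSD fun v _ => ⟨_, _, key v, key (I * v), ?_⟩
  rw [← add_re]
  have : F'' * v * v + F'' * (I * v) * (I * v) = 0 := by linear_combination F'' * v ^ 2 * I_sq
  rw [this, zero_re]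

lemma hasLap_polynomial (P : ℂ[X]) (p z : ℂ) :
    HasLap (fun w => (P.eval (w - p)).re) z 0 := by
  have key : ∀ (Q : ℂ[X]) (w : ℂ), HasDerivAt (fun w => Q.eval (w - p))
      (Q.derivative.eval (w - p)) w := by
    intro Q w
    simpa [Function.comp_def] using
      (Q.hasDerivAt (w - p)).comp w ((hasDerivAt_id w).sub_const p)
  exact hasLap_re (Eventually.of_forall (key P)) (key P.derivative z)

/-- Superharmonicity of fractional powers of positive harmonic functions. -/
lemma hasLap_re_rpow {F F' : ℂ → ℂ} {F'' z : ℂ} (s : ℝ)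
    (h : ∀ᶠ w in 𝓝 z, HasDerivAt F (F' w) w) (h' : HasDerivAt F' F'' z) (hpos : 0 < (F z).re) :
    HasLap (fun w => (F w).re ^ s) z (s * (s - 1) * (F z).re ^ (s - 2) * ‖F' z‖ ^ 2) := by
  have hFc : ContinuousAt F z := h.self_of_nhds.continuousAt
  have hev : ∀ᶠ w in 𝓝 z, 0 < (F w).re :=
    (continuous_re.continuousAt.comp hFc).eventually (lt_mem_nhds hpos)
  have key : ∀ v : ℂ, HasSD (fun w => (F w).re ^ s) z v
      (s * (s - 1) * (F z).re ^ (s - 2) * ((F' z * v).re) ^ 2 +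
        s * (F z).re ^ (s - 1) * (F'' * v * v).re) := by
    intro v
    refine hasSD_of_line
      (g' := fun t => (F' (z + t * v) * v).re * s * (F (z + t * v)).re ^ (s - 1)) ?_ ?_
    · filter_upwards [(tendsto_line z v).eventually h, (tendsto_line z v).eventually hev]
        with t ht hp
      exact (hasDerivAt_line ht).re_line.rpow_const (Or.inl hp.ne')
    · have h1 := ((hasDerivAt_line (v := v) (t := 0) (by simpa using h')).mul_const v).re_line
      have h2 := (hasDerivAt_line (v := v) (t := 0) (by simpa using h.self_of_nhds)).re_line
      have h3 := h2.rpow_const (p := s - 1) (Or.inl (by simpa using hpos.ne'))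
      convert! (h1.mul_const s).mul h3 using 1
      simp only [ofReal_zero, zero_mul, add_zero]
      rw [show s - 1 - 1 = s - 2 by ring]
      ring
  refine hasLap_of_hasSD fun v hv => ⟨_, _, key v, key (I * v), ?_⟩
  have e1 : (F'' * (I * v) * (I * v)).re = -(F'' * v * v).re := by
    rw [← neg_re]
    congr 1
    linear_combination F'' * v ^ 2 * I_sq
  have e2 : (F' z * (I * v)).re = -(F' z * v).im := by
    rw [show F' z * (I * v) = I * (F' z * v) by ring, I_mul_re]
  have e3 : (F' z * v).re ^ 2 + (F' z * v).im ^ 2 = ‖F' z‖ ^ 2 := by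
    have := Complex.sq_norm (F' z * v)
    rw [norm_mul, hv, mul_one, normSq_apply] at this
    linarith
  rw [e1, e2, ← e3]
  ring

/-! ### Quadratic polynomials -/

/-- `q` is a real quadratic polynomial on `ℂ` with Laplacian `e`. -/
def IsQuad (q : ℂ → ℝ) (e : ℝ) : Prop :=
  ∃ c₀ c₁ c₂ : ℂ, ∀ z, q z = (c₀ + c₁ * z + c₂ * z ^ 2).re + e / 4 * (z.re ^ 2 + z.im ^ 2)

lemma IsQuad.add {q₁ q₂ : ℂ → ℝ} {a b : ℝ} (h₁ : IsQuad q₁ a) (h₂ : IsQuad q₂ b) :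
    IsQuad (fun z => q₁ z + q₂ z) (a + b) := by
  obtain ⟨c₀, c₁, c₂, h⟩ := h₁
  obtain ⟨d₀, d₁, d₂, h'⟩ := h₂
  refine ⟨c₀ + d₀, c₁ + d₁, c₂ + d₂, fun z => ?_⟩
  beta_reduce
  rw [h, h']
  simp only [add_re, add_mul]
  ring

lemma IsQuad.const_mul {q : ℂ → ℝ} {a : ℝ} (c : ℝ) (h : IsQuad q a) :
    IsQuad (fun z => c * q z) (c * a) := by
  obtain ⟨c₀, c₁, c₂, h⟩ := h
  refine ⟨c * c₀, c * c₁, c * c₂, fun z => ?_⟩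
  beta_reduce
  rw [h, mul_add, ← re_ofReal_mul]
  ring_nf

lemma IsQuad.sub {q₁ q₂ : ℂ → ℝ} {a b : ℝ} (h₁ : IsQuad q₁ a) (h₂ : IsQuad q₂ b) :
    IsQuad (fun z => q₁ z - q₂ z) (a - b) := by
  convert! h₁.add (h₂.const_mul (-1)) using 1
  · funext z
    ring
  · ring

lemma IsQuad.translate {q : ℂ → ℝ} {a : ℝ} (h : IsQuad q a) (p : ℂ) :
    IsQuad (fun z => q (z - p)) a := by
  obtain ⟨c₀, c₁, c₂, h⟩ := h
  refine ⟨c₀ - c₁ * p + c₂ * p ^ 2 + (a / 4 * (p.re ^ 2 + p.im ^ 2) : ℝ),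
    c₁ - 2 * c₂ * p - (a / 2 : ℝ) * (starRingEnd ℂ) p, c₂, fun z => ?_⟩
  beta_reduce
  rw [h]
  simp [pow_two]
  ring

lemma IsQuad.reflect {q : ℂ → ℝ} {a : ℝ} {e : ℂ} (he : ‖e‖ = 1) (h : IsQuad q a) :
    IsQuad (fun z => q (e * (starRingEnd ℂ) z)) a := by
  obtain ⟨c₀, c₁, c₂, h⟩ := h
  refine ⟨c₀, (starRingEnd ℂ) (c₁ * e), (starRingEnd ℂ) (c₂ * e ^ 2), fun z => ?_⟩
  have he' : e.re ^ 2 + e.im ^ 2 = 1 := by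
    have := Complex.sq_norm e
    rw [he, normSq_apply] at this
    linarith
  beta_reduce
  rw [h, show z.re ^ 2 + z.im ^ 2 = (e.re ^ 2 + e.im ^ 2) * (z.re ^ 2 + z.im ^ 2) by
    rw [he', one_mul]]
  simp [pow_two]
  ring

lemma isQuad_harmonic (c₀ c₁ c₂ : ℂ) : IsQuad (fun z => (c₀ + c₁ * z + c₂ * z ^ 2).re) 0 :=
  ⟨c₀, c₁, c₂, fun z => by simp⟩

lemma isQuad_normSq (e : ℝ) : IsQuad (fun z => e / 4 * (z.re ^ 2 + z.im ^ 2)) e :=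
  ⟨0, 0, 0, fun z => by simp⟩

lemma IsQuad.continuous {q : ℂ → ℝ} {a : ℝ} (h : IsQuad q a) : Continuous q := by
  obtain ⟨c₀, c₁, c₂, h⟩ := h
  rw [show q = _ from funext h]
  fun_prop

lemma IsQuad.hasLap {q : ℂ → ℝ} {a : ℝ} (h : IsQuad q a) (z : ℂ) : HasLap q z a := by
  obtain ⟨c₀, c₁, c₂, h⟩ := h
  intro v hv
  have hv' : v.re ^ 2 + v.im ^ 2 = 1 := by
    have := Complex.sq_norm v
    rw [hv, normSq_apply] at this
    linarith
  refine tendsto_const_nhds.congr' ?_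
  filter_upwards [self_mem_nhdsWithin] with t ht
  have ht0 : t ≠ 0 := ne_of_gt ht
  rw [eq_div_iff (by positivity), ← mul_one a, ← hv']
  simp only [h]
  simp [pow_two]
  ring

/-- The second difference of a quadratic polynomial, as a quadratic form in `v`. -/
def sd (q : ℂ → ℝ) (v : ℂ) : ℝ := q v + q (-v) - 2 * q 0

lemma IsQuad.secondDiff {q : ℂ → ℝ} {a : ℝ} (h : IsQuad q a) (z v : ℂ) (t : ℝ) :
    q (z + t * v) + q (z - t * v) - 2 * q z = t ^ 2 * sd q v := by
  obtain ⟨c₀, c₁, c₂, h⟩ := h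
  simp only [sd, h]
  simp [pow_two]
  ring

lemma sd_sub (q₁ q₂ : ℂ → ℝ) (v : ℂ) : sd (fun z => q₁ z - q₂ z) v = sd q₁ v - sd q₂ v := by
  simp only [sd]
  ring

/-! ### Maximum principles -/

lemma max_principle {K U : Set ℂ} (hK : IsCompact K) (hU : IsOpen U) (hUK : U ⊆ K) {w : ℂ → ℝ}
    (hc : ContinuousOn w K) (hL : ∀ z ∈ U, ∃ L, 0 < L ∧ HasLap w z L)
    (hb : ∀ z ∈ K, z ∉ U → w z ≤ 0) : ∀ z ∈ K, w z ≤ 0 := by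
  intro z hz
  obtain ⟨y, hy, hmax⟩ := hK.exists_isMaxOn ⟨z, hz⟩ hc
  refine (hmax hz).trans ?_
  by_cases hyU : y ∈ U
  · obtain ⟨L, hL0, hL⟩ := hL y hyU
    have : IsLocalMax w y := (hmax.on_subset hUK).isLocalMax (hU.mem_nhds hyU)
    linarith [hL.nonpos_of_isLocalMax this]
  · exact hb y hy hyU

lemma norm_sq_eq (z : ℂ) : z.re ^ 2 + z.im ^ 2 = ‖z‖ ^ 2 := by
  rw [Complex.sq_norm, normSq_apply]
  ring

lemma le_of_lap_ge {K U : Set ℂ} (hK : IsCompact K) (hU : IsOpen U) (hUK : U ⊆ K) {w : ℂ → ℝ}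
    {p : ℂ} {r A ε : ℝ} (hA : 0 < A) (hKr : K ⊆ closedBall p r)
    (hc : ContinuousOn w K) (hL : ∀ z ∈ U, ∃ L, -A ≤ L ∧ HasLap w z L)
    (hb : ∀ z ∈ K, z ∉ U → w z ≤ ε) : ∀ z ∈ K, w z ≤ ε + A / 2 * r ^ 2 := by
  set q : ℂ → ℝ := fun z => 2 * A / 4 * ((z - p).re ^ 2 + (z - p).im ^ 2) with hq
  have hquad : IsQuad q (2 * A) := (isQuad_normSq (2 * A)).translate p
  have hc0 : IsQuad (fun _ => ε + A / 2 * r ^ 2) 0 := by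
    simpa using isQuad_harmonic ((ε + A / 2 * r ^ 2 : ℝ) : ℂ) 0 0
  have hqr : ∀ z ∈ K, q z ≤ A / 2 * r ^ 2 := by
    intro z hz
    have h1 := hKr hz
    rw [mem_closedBall, dist_eq_norm] at h1
    simp only [hq]
    rw [norm_sq_eq]
    have : ‖z - p‖ ^ 2 ≤ r ^ 2 := by gcongr
    nlinarith
  have := max_principle hK hU hUK (w := fun z => (w z + q z) - (ε + A / 2 * r ^ 2))
    ((hc.add hquad.continuous.continuousOn).sub continuousOn_const)
    (fun z hz => by
      obtain ⟨L, hL1, hL2⟩ := hL z hz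
      exact ⟨(L + 2 * A) - 0, by linarith, (hL2.add (hquad.hasLap z)).sub (hc0.hasLap z)⟩)
    (fun z hz hzU => by
      have := hqr z hz
      have := hb z hz hzU
      linarith)
  intro z hz
  have h1 := this z hz
  have h2 : 0 ≤ q z := by
    simp only [hq]
    positivity
  linarith

lemma abs_le_of_lap {K U : Set ℂ} (hK : IsCompact K) (hU : IsOpen U) (hUK : U ⊆ K) {w : ℂ → ℝ}
    {p : ℂ} {r A ε : ℝ} (hA : 0 < A) (hKr : K ⊆ closedBall p r)
    (hc : ContinuousOn w K) (hL : ∀ z ∈ U, ∃ L, |L| ≤ A ∧ HasLap w z L)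
    (hb : ∀ z ∈ K, z ∉ U → |w z| ≤ ε) : ∀ z ∈ K, |w z| ≤ ε + A / 2 * r ^ 2 := by
  intro z hz
  rw [abs_le']
  constructor
  · refine le_of_lap_ge hK hU hUK hA hKr hc (fun y hy => ?_) (fun y hy hyU => ?_) z hz
    · obtain ⟨L, h1, h2⟩ := hL y hy
      exact ⟨L, (abs_le.1 h1).1, h2⟩
    · exact (le_abs_self _).trans (hb y hy hyU)
  · refine le_of_lap_ge (w := fun z => -w z) hK hU hUK hA hKr hc.neg (fun y hy => ?_)
      (fun y hy hyU => ?_) z hz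
    · obtain ⟨L, h1, h2⟩ := hL y hy
      exact ⟨-L, neg_le_neg (abs_le.1 h1).2, h2.neg⟩
    · exact (neg_le_abs _).trans (hb y hy hyU)

/-! ### Harmonic approximation on discs and half discs -/

lemma exists_polynomial_disc {v : ℂ → ℝ} {p : ℂ} {r A : ℝ} (hr : 0 < r) (hA : 0 < A)
    (hc : ContinuousOn v (closedBall p r))
    (hL : ∀ z ∈ ball p r, ∃ L, |L| ≤ A ∧ HasLap v z L) :
    ∃ P : ℂ[X], ∀ z, ‖z - p‖ ≤ r → |v z - (P.eval (z - p)).re| ≤ A * r ^ 2 := by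
  obtain ⟨P, hP⟩ := exists_polynomial_re_near hr (hc.mono sphere_subset_closedBall)
    (show 0 < A / 2 * r ^ 2 by positivity)
  have hPc : Continuous fun z => (P.eval (z - p)).re := by fun_prop
  refine ⟨P, fun z hz => ?_⟩
  have := abs_le_of_lap (isCompact_closedBall p r) isOpen_ball ball_subset_closedBall
    (w := fun z => v z - (P.eval (z - p)).re) hA subset_rfl (hc.sub hPc.continuousOn)
    (fun y hy => by
      obtain ⟨L, h1, h2⟩ := hL y hy
      exact ⟨L - 0, by simpa using h1, h2.sub (hasLap_polynomial P p y)⟩)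
    (fun y hy hyU => hP y (by
      rw [mem_sphere]
      exact le_antisymm hy (not_lt.1 hyU))) z (by simpa [dist_eq_norm] using hz)
  linarith

/-- The odd reflection of `v` across the real axis. -/
def oddExt (v : ℂ → ℝ) (z : ℂ) : ℝ := if 0 ≤ z.im then v z else -v ((starRingEnd ℂ) z)

lemma norm_conj_sub {a : ℂ} (ha : a.im = 0) (z : ℂ) :
    ‖(starRingEnd ℂ) z - a‖ = ‖z - a‖ := by
  rw [← norm_conj (z - a), map_sub, conj_eq_iff_im.2 ha]

lemma oddExt_conj {v : ℂ → ℝ} {z : ℂ} (h0 : z.im = 0 → v z = 0) :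
    oddExt v ((starRingEnd ℂ) z) = -oddExt v z := by
  rcases lt_trichotomy z.im 0 with h | h | h
  · simp [oddExt, h.le, not_le.2 h]
  · have : (starRingEnd ℂ) z = z := conj_eq_iff_im.2 h
    simp [oddExt, this, h, h0 h]
  · simp [oddExt, h.le, not_le.2 h]

lemma exists_polynomial_halfDisc {v : ℂ → ℝ} {a : ℂ} (ha : a.im = 0) {r A : ℝ} (hr : 0 < r)
    (hA : 0 < A) (hc : ContinuousOn v (closedBall a r ∩ {z | 0 ≤ z.im}))
    (h0 : ∀ z ∈ closedBall a r, z.im = 0 → v z = 0)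
    (hL : ∀ z ∈ ball a r, 0 < z.im → ∃ L, |L| ≤ A ∧ HasLap v z L) :
    ∃ P : ℂ[X], ∀ z, ‖z - a‖ ≤ r → |oddExt v z - (P.eval (z - a)).re| ≤ A * r ^ 2 := by
  have hcl : IsClosed {z : ℂ | 0 ≤ z.im} := isClosed_le continuous_const continuous_im
  have hcl' : IsClosed {z : ℂ | z.im ≤ 0} := isClosed_le continuous_im continuous_const
  have hVc : ContinuousOn (oddExt v) (closedBall a r) := by
    have hu : closedBall a r =
        (closedBall a r ∩ {z | 0 ≤ z.im}) ∪ (closedBall a r ∩ {z | z.im ≤ 0}) := by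
      rw [← inter_union_distrib_left]
      ext z
      simp [le_total]
    rw [hu]
    refine ContinuousOn.union_of_isClosed ?_ ?_ (isClosed_closedBall.inter hcl)
      (isClosed_closedBall.inter hcl')
    · exact hc.congr fun z hz => if_pos hz.2
    · have h1 : ContinuousOn (fun z => -v ((starRingEnd ℂ) z))
          (closedBall a r ∩ {z | z.im ≤ 0}) := by
        refine (hc.comp continuous_conj.continuousOn fun z hz => ?_).neg
        refine ⟨?_, by simpa using hz.2⟩
        have := hz.1
        rw [mem_closedBall, dist_eq_norm] at this ⊢
        rwa [norm_conj_sub ha]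
      refine h1.congr fun z hz => ?_
      by_cases hz0 : z.im = 0
      · have : (starRingEnd ℂ) z = z := conj_eq_iff_im.2 hz0
        simp [oddExt, hz0, this, h0 z hz.1 hz0]
      · exact if_neg (not_le.2 (lt_of_le_of_ne hz.2 hz0))
  obtain ⟨P, hP⟩ := exists_polynomial_re_near hr (hVc.mono sphere_subset_closedBall)
    (show 0 < A / 2 * r ^ 2 by positivity)
  set Q : ℂ[X] := C (1 / 2 : ℂ) * (P - P.map (starRingEnd ℂ)) with hQ
  have hQe : ∀ w : ℂ, (Q.eval w).re =
      ((P.eval w).re - (P.eval ((starRingEnd ℂ) w)).re) / 2 := by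
    intro w
    have : (P.map (starRingEnd ℂ)).eval w = (starRingEnd ℂ) (P.eval ((starRingEnd ℂ) w)) := by
      rw [eval_map, ← eval₂_at_apply, conj_conj]
    rw [hQ, eval_mul, eval_sub, this, eval_C]
    simp
    ring
  have hconj : ∀ z : ℂ, (starRingEnd ℂ) z - a = (starRingEnd ℂ) (z - a) := by
    intro z
    rw [map_sub, conj_eq_iff_im.2 ha]
  have hQc : Continuous fun z => (Q.eval (z - a)).re := by fun_prop
  have hhalf : ∀ z ∈ closedBall a r ∩ {z : ℂ | 0 ≤ z.im},
      |v z - (Q.eval (z - a)).re| ≤ A / 2 * r ^ 2 + A / 2 * r ^ 2 := by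
    refine abs_le_of_lap (U := ball a r ∩ {z : ℂ | 0 < z.im})
      ((isCompact_closedBall a r).inter_right hcl)
      (isOpen_ball.inter (isOpen_lt continuous_const continuous_im))
      (inter_subset_inter ball_subset_closedBall fun z (hz : 0 < z.im) => hz.le)
      hA inter_subset_left (hc.sub hQc.continuousOn) ?_ ?_
    · intro y hy
      obtain ⟨L, h1, h2⟩ := hL y hy.1 hy.2
      exact ⟨L - 0, by simpa using h1, h2.sub (hasLap_polynomial Q a y)⟩
    · intro y hy hyU
      by_cases hy0 : y.im = 0
      · have : (starRingEnd ℂ) (y - a) = y - a := by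
          rw [← hconj, conj_eq_iff_im.2 hy0]
        rw [h0 y hy.1 hy0, hQe, this]
        simp only [sub_self, zero_div, abs_zero]
        positivity
      · have hyim : 0 < y.im := lt_of_le_of_ne hy.2 (Ne.symm hy0)
        have hys : y ∈ sphere a r := by
          rw [mem_sphere]
          refine le_antisymm hy.1 (not_lt.1 fun h => hyU ⟨h, hyim⟩)
        have hys' : (starRingEnd ℂ) y ∈ sphere a r := by
          rw [mem_sphere, dist_eq_norm] at hys ⊢
          rwa [norm_conj_sub ha]
        have h1 := hP y hys
        have h2 := hP _ hys'
        have e1 : oddExt v y = v y := if_pos hy.2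
        rw [oddExt_conj (fun h => absurd h hy0), hconj, e1] at h2
        rw [e1] at h1
        rw [hQe]
        rw [abs_le] at h1 h2 ⊢
        constructor <;> linarith
  refine ⟨Q, fun z hz => ?_⟩
  have hzb : z ∈ closedBall a r := by simpa [dist_eq_norm] using hz
  rcases le_or_gt 0 z.im with him | him
  · have := hhalf z ⟨hzb, him⟩
    rw [show oddExt v z = v z from if_pos him]
    linarith
  · have hzb' : (starRingEnd ℂ) z ∈ closedBall a r := by
      rw [mem_closedBall, dist_eq_norm, norm_conj_sub ha]
      exact hz
    have := hhalf _ ⟨hzb', by simpa using him.le⟩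
    rw [show oddExt v z = -v ((starRingEnd ℂ) z) from if_neg (not_le.2 him)]
    rw [hconj, hQe, conj_conj] at this
    rw [hQe]
    rw [abs_le] at this ⊢
    constructor <;> linarith

/-! ### The sector and the corner estimate -/

/-- The reflection of the sector of opening `ϑ` in its bisector. -/
def refl (ϑ : ℝ) (z : ℂ) : ℂ := cexp (ϑ * I) * (starRingEnd ℂ) z

/-- The closed sector of opening `ϑ`. -/
def cSec (ϑ : ℝ) : Set ℂ := {z | 0 ≤ z.im ∧ 0 ≤ (refl ϑ z).im}

/-- The open sector of opening `ϑ`. -/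
def oSec (ϑ : ℝ) : Set ℂ := {z | 0 < z.im ∧ 0 < (refl ϑ z).im}

lemma refl_im (ϑ : ℝ) (z : ℂ) : (refl ϑ z).im = Real.sin ϑ * z.re - Real.cos ϑ * z.im := by
  simp [refl, exp_ofReal_mul_I_re, exp_ofReal_mul_I_im]; ring

lemma refl_re (ϑ : ℝ) (z : ℂ) : (refl ϑ z).re = Real.cos ϑ * z.re + Real.sin ϑ * z.im := by
  simp [refl, exp_ofReal_mul_I_re, exp_ofReal_mul_I_im]

lemma refl_refl (ϑ : ℝ) (z : ℂ) : refl ϑ (refl ϑ z) = z := by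
  have h := Real.sin_sq_add_cos_sq ϑ
  apply Complex.ext
  · rw [refl_re, refl_re, refl_im]; linear_combination z.re * h
  · rw [refl_im, refl_re, refl_im]; linear_combination z.im * h

lemma norm_refl (ϑ : ℝ) (z : ℂ) : ‖refl ϑ z‖ = ‖z‖ := by
  simp [refl, norm_exp_ofReal_mul_I]

lemma refl_sub (ϑ : ℝ) (z w : ℂ) : refl ϑ z - refl ϑ w = refl ϑ (z - w) := by
  simp [refl, mul_sub]

lemma continuous_refl (ϑ : ℝ) : Continuous (refl ϑ) := by
  unfold refl; fun_prop

lemma isClosed_cSec (ϑ : ℝ) : IsClosed (cSec ϑ) := by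
  have h := continuous_refl ϑ
  exact (isClosed_le continuous_const continuous_im).inter
    (isClosed_le continuous_const (continuous_im.comp h))

lemma isOpen_oSec (ϑ : ℝ) : IsOpen (oSec ϑ) := by
  have h := continuous_refl ϑ
  exact (isOpen_lt continuous_const continuous_im).inter
    (isOpen_lt continuous_const (continuous_im.comp h))

lemma oSec_subset_cSec (ϑ : ℝ) : oSec ϑ ⊆ cSec ϑ := fun _ h => ⟨h.1.le, h.2.le⟩

lemma refl_mem_cSec {ϑ : ℝ} {z : ℂ} (h : z ∈ cSec ϑ) : refl ϑ z ∈ cSec ϑ :=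
  ⟨h.2, by rw [refl_refl]; exact h.1⟩

lemma refl_mem_oSec {ϑ : ℝ} {z : ℂ} (h : z ∈ oSec ϑ) : refl ϑ z ∈ oSec ϑ :=
  ⟨h.2, by rw [refl_refl]; exact h.1⟩

lemma zero_mem_cSec (ϑ : ℝ) : (0 : ℂ) ∈ cSec ϑ := by simp [cSec, refl]

lemma refl_im_eq (ϑ : ℝ) (z : ℂ) : (refl ϑ z).im = ‖z‖ * Real.sin (ϑ - arg z) := by
  rw [refl_im, Real.sin_sub]
  have h1 := norm_mul_cos_arg z
  have h2 := norm_mul_sin_arg z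
  linear_combination -Real.sin ϑ * h1 + Real.cos ϑ * h2

lemma im_eq (z : ℂ) : z.im = ‖z‖ * Real.sin (arg z) := (norm_mul_sin_arg z).symm

lemma mem_cSec_iff {ϑ : ℝ} (h0 : 0 < ϑ) (h1 : ϑ < π / 2) {z : ℂ} (hz : z ≠ 0) :
    z ∈ cSec ϑ ↔ 0 ≤ arg z ∧ arg z ≤ ϑ := by
  have hn : 0 < ‖z‖ := norm_pos_iff.2 hz
  constructor
  · rintro ⟨ha, hb⟩
    have ha' := arg_nonneg_iff.2 ha
    refine ⟨ha', ?_⟩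
    by_contra! hc
    have := Real.sin_neg_of_neg_of_neg_pi_lt (x := ϑ - arg z) (by linarith)
      (by linarith [arg_le_pi z])
    rw [refl_im_eq] at hb
    nlinarith
  · rintro ⟨ha, hb⟩
    refine ⟨arg_nonneg_iff.1 ha, ?_⟩
    rw [refl_im_eq]
    exact mul_nonneg hn.le (Real.sin_nonneg_of_nonneg_of_le_pi (by linarith) (by linarith))

lemma mem_oSec_iff {ϑ : ℝ} (h0 : 0 < ϑ) (h1 : ϑ < π / 2) {z : ℂ} :
    z ∈ oSec ϑ ↔ z ≠ 0 ∧ 0 < arg z ∧ arg z < ϑ := by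
  constructor
  · intro h
    have hz : z ≠ 0 := by rintro rfl; simpa using h.1
    obtain ⟨ha, hb⟩ := (mem_cSec_iff h0 h1 hz).1 (oSec_subset_cSec ϑ h)
    refine ⟨hz, lt_of_le_of_ne ha fun hc => ?_, lt_of_le_of_ne hb fun hc => ?_⟩
    · have := h.1
      rw [im_eq, ← hc] at this; simp at this
    · have := h.2
      rw [refl_im_eq, hc] at this; simp at this
  · rintro ⟨hz, ha, hb⟩
    have hn : 0 < ‖z‖ := norm_pos_iff.2 hz
    refine ⟨?_, ?_⟩
    · rw [im_eq]
      exact mul_pos hn (Real.sin_pos_of_pos_of_lt_pi ha (by linarith))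
    · rw [refl_im_eq]
      exact mul_pos hn (Real.sin_pos_of_pos_of_lt_pi (by linarith) (by linarith))

lemma ne_zero_of_mem_oSec {ϑ : ℝ} {z : ℂ} (h : z ∈ oSec ϑ) : z ≠ 0 := by
  rintro rfl; simpa using h.1

/-- A positive harmonic function homogeneous of degree `m`, comparable to `‖z‖ ^ m`, and its
strictly superharmonic powers. -/
lemma exists_barrier {ϑ m : ℝ} (h0 : 0 < ϑ) (h1 : ϑ < π / 2) (hm : 0 < m) (hmϑ : m * ϑ < π) :
    ∃ (h : ℂ → ℝ) (c : ℝ), 0 < c ∧ ContinuousOn h (cSec ϑ) ∧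
      (∀ z ∈ cSec ϑ, c * ‖z‖ ^ m ≤ h z ∧ h z ≤ ‖z‖ ^ m) ∧
      (∀ z ∈ oSec ϑ, HasLap h z 0) ∧
      ∀ s, 0 < s → s < 1 → ∀ z ∈ oSec ϑ, ∃ L, L ≤ -(s * (1 - s) * m ^ 2 * ‖z‖ ^ (m * s - 2)) ∧
        HasLap (fun z => h z ^ s) z L := by
  set e : ℂ := cexp (((-(ϑ / 2) : ℝ) : ℂ) * I) with he
  have hne : ‖e‖ = 1 := norm_exp_ofReal_mul_I _
  have hzarg : ∀ z ∈ cSec ϑ, z ≠ 0 → |arg (z * e)| ≤ ϑ / 2 := by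
    intro z hz hz0
    obtain ⟨ha, hb⟩ := (mem_cSec_iff h0 h1 hz0).1 hz
    have harge : arg e = -(ϑ / 2) := by
      rw [he, arg_exp_mul_I, toIocMod_eq_self]
      exact ⟨by linarith, by linarith⟩
    have hee : e ≠ 0 := by rw [← norm_pos_iff, hne]; norm_num
    rw [arg_mul hz0 hee (by rw [harge]; exact ⟨by linarith, by linarith⟩), harge, abs_le]
    constructor <;> linarith
  have hre : ∀ z ∈ cSec ϑ, z ≠ 0 → 0 < (z * e).re := by
    intro z hz hz0
    have := hzarg z hz hz0
    rw [abs_le] at this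
    rw [← norm_mul_cos_arg]
    have hee : z * e ≠ 0 := by
      rw [← norm_pos_iff, norm_mul, hne]; simpa using hz0
    exact mul_pos (norm_pos_iff.2 hee)
      (Real.cos_pos_of_mem_Ioo ⟨by linarith [this.1], by linarith [this.2]⟩)
  set F : ℂ → ℂ := fun z => (z * e) ^ (m : ℂ) with hF
  have hm0 : (m : ℂ) ≠ 0 := by exact_mod_cast hm.ne'
  have hFnorm : ∀ z, ‖F z‖ = ‖z‖ ^ m := by
    intro z
    by_cases hz : z * e = 0
    · have : z = 0 := by
        have := congrArg norm hz
        simpa [hne] using this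
      simp [hF, this, hm0, Real.zero_rpow hm.ne']
    · simp only [hF]
      rw [norm_cpow_of_ne_zero hz]; simp [hne]
  have hcosm : 0 < Real.cos (m * (ϑ / 2)) :=
    Real.cos_pos_of_mem_Ioo ⟨by nlinarith [Real.pi_pos], by linarith⟩
  have hFre : ∀ z ∈ cSec ϑ, z ≠ 0 → Real.cos (m * (ϑ / 2)) * ‖z‖ ^ m ≤ (F z).re := by
    intro z hz hz0
    have hee : z * e ≠ 0 := by
      rw [← norm_pos_iff, norm_mul, hne]; simpa using hz0
    have hform : (F z).re = ‖z‖ ^ m * Real.cos (m * arg (z * e)) := by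
      simp only [hF]
      rw [cpow_def_of_ne_zero hee, exp_re]
      congr 1
      · simp only [mul_re, ofReal_re, ofReal_im, mul_zero, sub_zero, log_re]
        rw [Real.rpow_def_of_pos (norm_pos_iff.2 hz0), norm_mul, hne, mul_one]
      · simp [log_im, mul_comm]
    rw [hform, mul_comm]
    gcongr
    rw [← Real.cos_abs (m * arg (z * e)), abs_mul, abs_of_pos hm]
    apply Real.cos_le_cos_of_nonneg_of_le_pi (by positivity) (by nlinarith [Real.pi_pos])
    gcongr
    exact hzarg z hz hz0
  set F' : ℂ → ℂ := fun z => m * (z * e) ^ ((m : ℂ) - 1) * e with hF'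
  have hd : ∀ z ∈ oSec ϑ, HasDerivAt F (F' z) z := by
    intro z hz
    have hsl : z * e ∈ slitPlane :=
      Or.inl (hre z (oSec_subset_cSec ϑ hz) (ne_zero_of_mem_oSec hz))
    have := ((hasDerivAt_id z).mul_const e).cpow_const (c := (m : ℂ)) hsl
    simpa [hF, hF'] using this
  have hd2 : ∀ z ∈ oSec ϑ, ∃ F'', HasDerivAt F' F'' z := by
    intro z hz
    have hsl : z * e ∈ slitPlane :=
      Or.inl (hre z (oSec_subset_cSec ϑ hz) (ne_zero_of_mem_oSec hz))
    have := ((((hasDerivAt_id z).mul_const e).cpow_const (c := (m : ℂ) - 1) hsl).const_mul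
      (m : ℂ)).mul_const e
    exact ⟨_, this⟩
  have hd1 : ∀ z ∈ oSec ϑ, ∀ᶠ w in 𝓝 z, HasDerivAt F (F' w) w := fun z hz =>
    (isOpen_oSec ϑ).eventually_mem hz |>.mono hd
  have hpos : ∀ z ∈ oSec ϑ, 0 < (F z).re := fun z hz => by
    have := hFre z (oSec_subset_cSec ϑ hz) (ne_zero_of_mem_oSec hz)
    have h2 := norm_pos_iff.2 (ne_zero_of_mem_oSec hz)
    exact lt_of_lt_of_le (by positivity) this
  have hle : ∀ z, (F z).re ≤ ‖z‖ ^ m := fun z => (re_le_norm _).trans (hFnorm z).le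
  refine ⟨fun z => (F z).re, Real.cos (m * (ϑ / 2)), hcosm, ?_, ?_, ?_, ?_⟩
  · intro z hz
    apply ContinuousAt.continuousWithinAt
    have hc : ContinuousAt (fun x : ℂ => x ^ (m : ℂ)) (z * e) := by
      by_cases hz0 : z = 0
      · apply continuousAt_cpow_const_of_re_pos
        · left; simp [hz0]
        · simpa using hm
      · exact continuousAt_cpow_const (Or.inl (hre z hz hz0))
    exact continuous_re.continuousAt.comp
      (ContinuousAt.comp (f := fun z : ℂ => z * e) hc (by fun_prop))
  · intro z hz
    refine ⟨?_, hle z⟩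
    by_cases hz0 : z = 0
    · simp [hF, hz0, hm0, Real.zero_rpow hm.ne']
    · exact hFre z hz hz0
  · intro z hz
    obtain ⟨F'', h2⟩ := hd2 z hz
    exact hasLap_re (hd1 z hz) h2
  · intro s hs0 hs1 z hz
    obtain ⟨F'', h2⟩ := hd2 z hz
    refine ⟨_, ?_, hasLap_re_rpow s (hd1 z hz) h2 (hpos z hz)⟩
    have hz0 := ne_zero_of_mem_oSec hz
    have hn : 0 < ‖z‖ := norm_pos_iff.2 hz0
    have hee : z * e ≠ 0 := by
      rw [← norm_pos_iff, norm_mul, hne]; simpa using hz0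
    have hF'n : ‖F' z‖ = m * ‖z‖ ^ (m - 1) := by
      simp only [hF', norm_mul, hne, norm_real, Real.norm_eq_abs, abs_of_pos hm, mul_one]
      rw [norm_cpow_of_ne_zero hee]; simp [hne]
    have h3 : (‖z‖ ^ m) ^ (s - 2) ≤ (F z).re ^ (s - 2) :=
      Real.rpow_le_rpow_of_nonpos (hpos z hz) (hle z) (by linarith)
    have h4 : (‖z‖ ^ m) ^ (s - 2) * (‖z‖ ^ (m - 1)) ^ 2 = ‖z‖ ^ (m * s - 2) := by
      rw [← Real.rpow_mul hn.le, ← Real.rpow_natCast, ← Real.rpow_mul hn.le, ← Real.rpow_add hn]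
      congr 1; push_cast; ring
    rw [hF'n, ← h4]
    have h5 : (‖z‖ ^ m) ^ (s - 2) * (‖z‖ ^ (m - 1)) ^ 2 ≤
        (F z).re ^ (s - 2) * (‖z‖ ^ (m - 1)) ^ 2 := by gcongr
    have h6 : 0 ≤ s * (1 - s) * m ^ 2 := by
      have : 0 < 1 - s := by linarith
      positivity
    nlinarith [mul_le_mul_of_nonneg_left h5 h6]

/-- The normalised boundary value problem on the sector. -/
structure Hyp (ϑ α K : ℝ) (f u : ℂ → ℝ) : Prop where
  cont : ContinuousOn u (cSec ϑ)
  lap : ∀ z ∈ oSec ϑ, HasLap u z (f z)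
  zero : ∀ z ∈ cSec ϑ, z.im = 0 ∨ (refl ϑ z).im = 0 → u z = 0
  holder : ∀ z ∈ cSec ϑ, ∀ w ∈ cSec ϑ, |f z - f w| ≤ K * ‖z - w‖ ^ α
  growth : ∀ m : ℝ, 2 < m → ∀ ε, 0 < ε → ∀ᶠ ρ in atTop, ∀ z ∈ cSec ϑ, ‖z‖ = ρ → |u z| ≤ ε * ρ ^ m

lemma Hyp.refl {ϑ α K : ℝ} {f u : ℂ → ℝ} (h : Hyp ϑ α K f u) :
    Hyp ϑ α K (fun z => f (refl ϑ z)) (fun z => u (refl ϑ z)) where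
  cont := h.cont.comp (continuous_refl ϑ).continuousOn fun _ hz => refl_mem_cSec hz
  lap z hz := (h.lap _ (refl_mem_oSec hz)).reflect (norm_exp_ofReal_mul_I _)
  zero z hz hh := h.zero _ (refl_mem_cSec hz) (by rw [refl_refl]; exact hh.symm)
  holder z hz w hw := by
    have := h.holder _ (refl_mem_cSec hz) _ (refl_mem_cSec hw)
    rwa [refl_sub, norm_refl] at this
  growth m hm ε hε := by
    filter_upwards [h.growth m hm ε hε] with ρ hρ z hz hn
    exact hρ _ (refl_mem_cSec hz) (by rw [norm_refl, hn])

/-- The quadratic polynomial with Laplacian `a` vanishing on both edges of the sector. -/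
def cornerQuad (ϑ a : ℝ) (z : ℂ) : ℝ := -(a / (2 * Real.cos ϑ)) * (z.im * (refl ϑ z).im)

lemma isQuad_cornerQuad {ϑ : ℝ} (hc : 0 < Real.cos ϑ) (a : ℝ) : IsQuad (cornerQuad ϑ a) a := by
  refine ⟨0, 0, ⟨-(a / 4), a / 4 * (Real.sin ϑ / Real.cos ϑ)⟩, fun z => ?_⟩
  simp only [cornerQuad, refl_im, add_re, mul_re, pow_two, mul_im, zero_re, zero_im]
  field_simp
  ring

lemma abs_cornerQuad_le {ϑ : ℝ} (hc : 0 < Real.cos ϑ) (a : ℝ) (z : ℂ) :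
    |cornerQuad ϑ a z| ≤ |a| / (2 * Real.cos ϑ) * ‖z‖ ^ 2 := by
  rw [cornerQuad, abs_mul, abs_neg, abs_div, abs_of_pos (by positivity : 0 < 2 * Real.cos ϑ),
    abs_mul, pow_two]
  have h1 := abs_im_le_norm z
  have h2 := abs_im_le_norm (refl ϑ z)
  rw [norm_refl] at h2
  gcongr

lemma growth_cornerQuad {ϑ : ℝ} (hc : 0 < Real.cos ϑ) (a m : ℝ) (hm : 2 < m) {ε : ℝ}
    (hε : 0 < ε) : ∀ᶠ ρ in atTop, ∀ z : ℂ, ‖z‖ = ρ → |cornerQuad ϑ a z| ≤ ε * ρ ^ m := by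
  have h := (tendsto_rpow_atTop (by linarith : 0 < m - 2)).eventually_ge_atTop
    (|a| / (2 * Real.cos ϑ) / ε)
  filter_upwards [h, eventually_gt_atTop 0] with ρ hρ h0 z hz
  refine (abs_cornerQuad_le hc a z).trans ?_
  have hm2 : ρ ^ m = ρ ^ (m - 2) * ρ ^ 2 := by
    rw [← Real.rpow_natCast, ← Real.rpow_add h0]; congr 1; push_cast; ring
  rw [hz, hm2, ← mul_assoc]
  rw [div_le_iff₀' hε] at hρ
  gcongr

/-- The corner estimate. -/
lemma exists_corner {ϑ α : ℝ} (h0 : 0 < ϑ) (h1 : ϑ < π / 2) (hα : 0 ≤ α)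
    (hαϑ : (2 + α) * ϑ < π) : ∃ C, 0 < C ∧ ∀ K f u, 0 < K → Hyp ϑ α K f u →
      ∀ z ∈ cSec ϑ, |u z - cornerQuad ϑ (f 0) z| ≤ C * K * ‖z‖ ^ (2 + α) := by
  obtain ⟨m, hm1, hm2⟩ := exists_between ((lt_div_iff₀ h0).2 hαϑ)
  have hmϑ := (lt_div_iff₀ h0).1 hm2
  have hm : 0 < m := by linarith
  obtain ⟨h, c, hc, hcont, hbd, hlap, hpow⟩ := exists_barrier h0 h1 hm hmϑ
  have hcos : 0 < Real.cos ϑ := Real.cos_pos_of_mem_Ioo ⟨by linarith, h1⟩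
  set s := (2 + α) / m with hs
  have hs0 : 0 < s := by positivity
  have hs1 : s < 1 := (div_lt_one hm).2 hm1
  have hms : m * s = 2 + α := by rw [hs]; field_simp
  have hB : 0 < s * (1 - s) * m ^ 2 := by
    have : 0 < 1 - s := by linarith
    positivity
  refine ⟨2 / (s * (1 - s) * m ^ 2), by positivity, fun K f u hK H => ?_⟩
  set B := s * (1 - s) * m ^ 2
  have hq := isQuad_cornerQuad hcos (f 0)
  have key : ∀ σ : ℝ, |σ| = 1 → ∀ z ∈ cSec ϑ, ∀ ε, 0 < ε →
      σ * (u z - cornerQuad ϑ (f 0) z) ≤ 2 / B * K * h z ^ s + ε * h z := by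
    intro σ hσ z hz ε hε
    have hev := (H.growth m (by linarith) (ε * c / 2) (by positivity)).and
      (growth_cornerQuad hcos (f 0) m (by linarith) (by positivity : 0 < ε * c / 2))
    obtain ⟨ρ, ⟨hρ1, hρ2⟩, hρz⟩ := (hev.and (eventually_ge_atTop ‖z‖)).exists
    have hmp := max_principle (K := cSec ϑ ∩ closedBall 0 ρ) (U := oSec ϑ ∩ ball 0 ρ)
      ((isCompact_closedBall 0 ρ).inter_left (isClosed_cSec ϑ))
      ((isOpen_oSec ϑ).inter isOpen_ball)
      (inter_subset_inter (oSec_subset_cSec ϑ) ball_subset_closedBall)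
      (w := fun z => σ * (u z - cornerQuad ϑ (f 0) z) - (2 / B * K * h z ^ s + ε * h z))
      ?_ ?_ ?_ z ⟨hz, by simpa using hρz⟩
    · linarith
    · have hc1 := (hcont.rpow_const (p := s) fun _ _ => Or.inr hs0.le)
      exact (((H.cont.sub hq.continuous.continuousOn).const_smul σ).sub
        ((hc1.const_smul (2 / B * K)).add (hcont.const_smul ε))).mono inter_subset_left
    · rintro y ⟨hy, -⟩
      obtain ⟨L, hL, hL2⟩ := hpow s hs0 hs1 y hy
      refine ⟨_, ?_, (((H.lap y hy).sub (hq.hasLap y)).const_mul σ).sub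
        ((hL2.const_mul (2 / B * K)).add ((hlap y hy).const_mul ε))⟩
      have h2 := H.holder y (oSec_subset_cSec ϑ hy) 0 (zero_mem_cSec ϑ)
      have h3 : 0 < ‖y‖ ^ α :=
        Real.rpow_pos_of_pos (norm_pos_iff.2 (ne_zero_of_mem_oSec hy)) _
      rw [hms, add_sub_cancel_left] at hL
      rw [sub_zero] at h2
      have h4 : -(K * ‖y‖ ^ α) ≤ σ * (f y - f 0) := by
        have : |σ * (f y - f 0)| ≤ K * ‖y‖ ^ α := by rwa [abs_mul, hσ, one_mul]
        exact (abs_le.1 this).1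
      have h5 : 2 / B * K * L ≤ -(2 * (K * ‖y‖ ^ α)) := by
        calc 2 / B * K * L ≤ 2 / B * K * -(B * ‖y‖ ^ α) := by gcongr
          _ = _ := by field_simp
      nlinarith [mul_pos hK h3]
    · rintro y ⟨hy, hyρ⟩ hyU
      obtain ⟨hb1, hb2⟩ := hbd y hy
      have hy0 : 0 ≤ h y := le_trans (by positivity) hb1
      have hpos : 0 ≤ 2 / B * K * h y ^ s := by positivity
      by_cases hyo : y ∈ oSec ϑ
      · have hyn : ‖y‖ = ρ := by
          apply le_antisymm (by simpa using hyρ)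
          by_contra! hlt
          exact hyU ⟨hyo, by simpa using hlt⟩
        have e1 := hρ1 y hy hyn
        have e2 := hρ2 y hyn
        have e3 : |σ * (u y - cornerQuad ϑ (f 0) y)| ≤ ε * c * ρ ^ m := by
          rw [abs_mul, hσ, one_mul]
          refine (abs_sub _ _).trans ?_
          linarith
        rw [hyn] at hb1
        have e4 : ε * (c * ρ ^ m) ≤ ε * h y := by gcongr
        have := (abs_le.1 e3).2
        nlinarith
      · have hedge : y.im = 0 ∨ (refl ϑ y).im = 0 := by
          by_contra! hne
          exact hyo ⟨lt_of_le_of_ne hy.1 hne.1.symm, lt_of_le_of_ne hy.2 hne.2.symm⟩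
        have hq0 : cornerQuad ϑ (f 0) y = 0 := by
          rcases hedge with h | h <;> simp [cornerQuad, h]
        simp only [H.zero y hy hedge, hq0]
        have : 0 ≤ ε * h y := by positivity
        linarith
  intro z hz
  obtain ⟨hb1, hb2⟩ := hbd z hz
  have hy0 : 0 ≤ h z := le_trans (by positivity) hb1
  have hfin : ∀ σ : ℝ, |σ| = 1 → σ * (u z - cornerQuad ϑ (f 0) z) ≤
      2 / B * K * ‖z‖ ^ (2 + α) := by
    intro σ hσ
    have e1 : σ * (u z - cornerQuad ϑ (f 0) z) ≤ 2 / B * K * h z ^ s := by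
      apply le_of_forall_pos_le_add
      intro η hη
      have := key σ hσ z hz (η / (h z + 1)) (by positivity)
      have h2 : η / (h z + 1) * h z ≤ η := by
        rw [div_mul_eq_mul_div, div_le_iff₀ (by positivity)]; nlinarith
      linarith
    refine e1.trans ?_
    rw [← hms, Real.rpow_mul (norm_nonneg z)]
    gcongr
  rw [abs_le]
  have e1 := hfin 1 (by simp)
  have e2 := hfin (-1) (by simp)
  constructor <;> linarith

/-! ### Quadratic approximation at every point of the sector -/

lemma rpow_two_add {r : ℝ} (hr : 0 < r) (α : ℝ) : r ^ (2 + α) = r ^ α * r ^ 2 := by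
  rw [Real.rpow_add hr, mul_comm]; norm_cast

lemma isQuad_imSq (a : ℝ) : IsQuad (fun z => a / 2 * z.im ^ 2) a := by
  refine ⟨0, 0, ⟨-(a / 4), 0⟩, fun z => ?_⟩
  simp [pow_two]
  ring

lemma abs_im_refl_sub_le (ϑ : ℝ) (z p : ℂ) : |(refl ϑ z).im - (refl ϑ p).im| ≤ ‖z - p‖ := by
  rw [← sub_im, refl_sub, ← norm_refl ϑ (z - p)]
  exact abs_im_le_norm _

lemma abs_im_sub_le (z p : ℂ) : |z.im - p.im| ≤ ‖z - p‖ := by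
  rw [← sub_im]; exact abs_im_le_norm _

lemma abs_oddExt_le {v : ℂ → ℝ} {a : ℂ} (ha : a.im = 0) {r B : ℝ}
    (h : ∀ z, ‖z - a‖ ≤ r → 0 ≤ z.im → |v z| ≤ B) (z : ℂ) (hz : ‖z - a‖ ≤ r) :
    |oddExt v z| ≤ B := by
  unfold oddExt
  split_ifs with h0
  · exact h z hz h0
  · rw [abs_neg]
    exact h _ (by rwa [norm_conj_sub ha]) (by rw [conj_im]; linarith)

/-- Quadratic approximation centred at a point of the edge `Im z = 0`. -/
lemma exists_edge {ϑ α : ℝ} (h0 : 0 < ϑ) (h1 : ϑ < π / 2) (hα : 0 ≤ α) (hα1 : α < 1)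
    (hαϑ : (2 + α) * ϑ < π) : ∃ C, 0 < C ∧ ∀ K f u, 0 < K → Hyp ϑ α K f u →
      ∀ a : ℂ, a.im = 0 → 0 < a.re → ∀ r, 0 < r → ∃ q e, IsQuad q e ∧
        |e - f a| ≤ C * K * r ^ α ∧
        ∀ z ∈ cSec ϑ, ‖z - a‖ ≤ r → |u z - q z| ≤ C * K * r ^ (2 + α) := by
  obtain ⟨C₁, hC₁, hcorner⟩ := exists_corner h0 h1 hα hαϑ
  have hcos : 0 < Real.cos ϑ := Real.cos_pos_of_mem_Ioo ⟨by linarith, h1⟩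
  have hsin : 0 < Real.sin ϑ := Real.sin_pos_of_pos_of_lt_pi h0 (by linarith)
  set D := 1 / Real.sin ϑ + 1 with hD
  have hD0 : 0 < D := by positivity
  set M := C₁ * D ^ (2 + α) + D ^ α with hM
  obtain ⟨C₂, hC₂, hcamp⟩ := exists_quadratic_of_harmonic_approx α hα1 M (by positivity)
  refine ⟨M + C₂, by positivity, fun K f u hK H a ha hare r hr => ?_⟩
  have hna : ‖a‖ = a.re := by
    have : a = (a.re : ℂ) := Complex.ext rfl (by simpa using ha)
    rw [this, norm_real, Real.norm_of_nonneg hare.le, ofReal_re]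
  set R := a.re * Real.sin ϑ with hR
  have hR0 : 0 < R := by positivity
  have haR : a.re = R / Real.sin ϑ := by rw [hR]; field_simp
  have hrefl_a : (refl ϑ a).im = R := by rw [refl_im, ha]; ring
  have hacS : a ∈ cSec ϑ := ⟨ha.ge, by rw [hrefl_a]; exact hR0.le⟩
  have hDR : ∀ ρ, R ≤ ρ → a.re ≤ D * ρ ∧ a.re + ρ ≤ D * ρ := by
    intro ρ hρ
    have : R / Real.sin ϑ ≤ ρ / Real.sin ϑ := by gcongr
    rw [hD, haR]
    constructor
    · have h3 : D * ρ = ρ / Real.sin ϑ + ρ := by rw [hD]; ring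
      rw [← hD, h3]; linarith
    · have h3 : D * ρ = ρ / Real.sin ϑ + ρ := by rw [hD]; ring
      rw [← hD, h3]; linarith
  have hf0 : ∀ ρ, R ≤ ρ → |f 0 - f a| ≤ K * (D ^ α * ρ ^ α) := by
    intro ρ hρ
    have hρ0 : 0 < ρ := by linarith
    refine (H.holder 0 (zero_mem_cSec ϑ) a hacS).trans ?_
    rw [zero_sub, norm_neg, hna, ← Real.mul_rpow hD0.le hρ0.le]
    gcongr
    exact (hDR ρ hρ).1
  have hcor : ∀ ρ, R ≤ ρ → ∀ z ∈ cSec ϑ, ‖z - a‖ ≤ ρ →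
      |u z - cornerQuad ϑ (f 0) z| ≤ C₁ * K * (D ^ (2 + α) * ρ ^ (2 + α)) := by
    intro ρ hρ z hz hza
    have hρ0 : 0 < ρ := by linarith
    refine (hcorner K f u hK H z hz).trans ?_
    rw [← Real.mul_rpow hD0.le hρ0.le]
    have : ‖z‖ ≤ D * ρ := by
      calc ‖z‖ = ‖a + (z - a)‖ := by ring_nf
        _ ≤ ‖a‖ + ‖z - a‖ := norm_add_le _ _
        _ ≤ a.re + ρ := by rw [hna]; gcongr
        _ ≤ _ := (hDR ρ hρ).2
    gcongr
  have hq₀ := isQuad_cornerQuad hcos (f 0)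
  have hpw : 0 < r ^ (2 + α) := by positivity
  have hpw' : 0 < r ^ α := by positivity
  rcases le_or_gt R r with hrR | hrR
  · refine ⟨_, _, hq₀, (hf0 r hrR).trans ?_, fun z hz hza => (hcor r hrR z hz hza).trans ?_⟩
    · have : 0 < (C₁ * D ^ (2 + α) + C₂) * K * r ^ α := by positivity
      rw [hM]; linarith
    · have : 0 < (D ^ α + C₂) * K * r ^ (2 + α) := by positivity
      rw [hM]; linarith
  have hsub : ∀ z, ‖z - a‖ ≤ R → 0 ≤ z.im → z ∈ cSec ϑ := by
    intro z hz hzi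
    have := (abs_le.1 (abs_im_refl_sub_le ϑ z a)).1
    exact ⟨hzi, by linarith⟩
  have hsub' : ∀ z, ‖z - a‖ < R → 0 < z.im → z ∈ oSec ϑ := by
    intro z hz hzi
    have := (abs_le.1 (abs_im_refl_sub_le ϑ z a)).1
    exact ⟨hzi, by linarith⟩
  have hq₁ := hq₀.add (isQuad_imSq (f a - f 0))
  set q₁ : ℂ → ℝ := fun z => cornerQuad ϑ (f 0) z + (f a - f 0) / 2 * z.im ^ 2 with hq₁def
  have hvR : ∀ z, ‖z - a‖ ≤ R → 0 ≤ z.im → |u z - q₁ z| ≤ M * K * R ^ (2 + α) := by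
    intro z hz hzi
    have e1 := hcor R le_rfl z (hsub z hz hzi) hz
    have e2 : |(f a - f 0) / 2 * z.im ^ 2| ≤ K * (D ^ α * R ^ α) * R ^ 2 := by
      rw [abs_mul, abs_pow, abs_div, abs_sub_comm, abs_two]
      have h3 : |z.im| ≤ R := by
        have := abs_im_sub_le z a
        rw [ha, sub_zero] at this
        linarith
      have h4 := hf0 R le_rfl
      gcongr
      linarith [abs_nonneg (f 0 - f a)]
    rw [hq₁def]
    calc _ = |(u z - cornerQuad ϑ (f 0) z) - (f a - f 0) / 2 * z.im ^ 2| := by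
          beta_reduce; ring_nf
      _ ≤ _ := abs_sub _ _
      _ ≤ _ := add_le_add e1 e2
      _ = _ := by rw [hM, rpow_two_add hR0 α]; ring
  obtain ⟨c₀, c₁, c₂, hc⟩ := hcamp (oddExt fun z => u z - q₁ z) a R K hR0 hK
    (fun ρ hρ0 hρR => by
      rw [rpow_two_add hρ0, ← mul_assoc]
      refine exists_polynomial_halfDisc (v := fun z => u z - q₁ z) ha hρ0
        (by positivity : 0 < K * ρ ^ α) ?_ ?_ ?_
      · refine (H.cont.sub hq₁.continuous.continuousOn).mono ?_
        rintro z ⟨hz, hzi⟩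
        exact hsub z (by rw [mem_closedBall, dist_eq] at hz; linarith) hzi
      · intro z hz hzi
        rw [mem_closedBall, dist_eq] at hz
        rw [H.zero z (hsub z (by linarith) hzi.ge) (Or.inl hzi)]
        simp [hq₁def, cornerQuad, hzi]
      · intro z hz hzi
        rw [mem_ball, dist_eq] at hz
        have hzo := hsub' z (by linarith) hzi
        refine ⟨_, ?_, (H.lap z hzo).sub (hq₁.hasLap z)⟩
        rw [add_sub_cancel]
        refine (H.holder z (oSec_subset_cSec ϑ hzo) a hacS).trans ?_
        gcongr)
    (abs_oddExt_le ha hvR) r hr hrR.le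
  refine ⟨_, _, hq₁.add ((isQuad_harmonic c₀ c₁ c₂).translate a), ?_, fun z hz hza => ?_⟩
  · have : f 0 + (f a - f 0) + 0 - f a = 0 := by ring
    rw [this, abs_zero]; positivity
  · have := hc z hza
    rw [oddExt, if_pos hz.1] at this
    rw [← sub_sub]
    refine this.trans ?_
    have h3 : 0 < M * K * r ^ (2 + α) := by positivity
    linarith

/-- Quadratic approximation centred at a point closer to the edge `Im z = 0`. -/
lemma exists_interior {ϑ α : ℝ} (h0 : 0 < ϑ) (h1 : ϑ < π / 2) (hα : 0 ≤ α) (hα1 : α < 1)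
    (hαϑ : (2 + α) * ϑ < π) : ∃ C, 0 < C ∧ ∀ K f u, 0 < K → Hyp ϑ α K f u →
      ∀ p ∈ oSec ϑ, p.im ≤ (refl ϑ p).im → ∀ r, 0 < r → ∃ q e, IsQuad q e ∧
        ∀ z ∈ cSec ϑ, ‖z - p‖ ≤ r → |u z - q z| ≤ C * K * r ^ (2 + α) := by
  obtain ⟨C₁, hC₁, hedge⟩ := exists_edge h0 h1 hα hα1 hαϑ
  have hcos : 0 < Real.cos ϑ := Real.cos_pos_of_mem_Ioo ⟨by linarith, h1⟩
  have hsin : 0 < Real.sin ϑ := Real.sin_pos_of_pos_of_lt_pi h0 (by linarith)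
  set M := C₁ * 2 ^ (2 + α) + C₁ * 2 ^ α + 1 with hM
  obtain ⟨C₂, hC₂, hcamp⟩ := exists_quadratic_of_harmonic_approx α hα1 M (by positivity)
  refine ⟨M + C₂, by positivity, fun K f u hK H p hp hpp r hr => ?_⟩
  set d := p.im with hd
  have hd0 : 0 < d := hp.1
  have hre : 0 < p.re := by
    have h2 := hp.2
    rw [refl_im] at h2
    have : 0 < Real.cos ϑ * p.im := mul_pos hcos hd0
    exact pos_of_mul_pos_right (by linarith : 0 < Real.sin ϑ * p.re) hsin.le
  set a : ℂ := (p.re : ℂ) with ha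
  have hai : a.im = 0 := ofReal_im _
  have hare : 0 < a.re := by simpa [ha] using hre
  have hpa : ‖p - a‖ = d := by
    have : p - a = (d : ℂ) * I := Complex.ext (by simp [ha]) (by simp [ha, hd])
    rw [this]; simp [abs_of_pos hd0]
  have htri : ∀ z, ‖z - a‖ ≤ ‖z - p‖ + d := fun z => by
    rw [← hpa]; exact norm_sub_le_norm_sub_add_norm_sub z p a
  have hacS : a ∈ cSec ϑ := ⟨hai.ge, by rw [refl_im, hai]; nlinarith⟩
  have hpw : 0 < r ^ (2 + α) := by positivity
  rcases le_or_gt d r with hdr | hdr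
  · obtain ⟨q, e, hq, -, hqz⟩ := hedge K f u hK H a hai hare (2 * r) (by positivity)
    refine ⟨q, e, hq, fun z hz hzp => (hqz z hz ((htri z).trans (by linarith))).trans ?_⟩
    rw [Real.mul_rpow (by norm_num) hr.le]
    have : 0 < (C₁ * 2 ^ α + 1 + C₂) * K * r ^ (2 + α) := by positivity
    rw [hM]; linarith
  obtain ⟨q, e, hq, he, hqz⟩ := hedge K f u hK H a hai hare (2 * d) (by positivity)
  have hsub : ∀ z, ‖z - p‖ ≤ d → z ∈ cSec ϑ := by
    intro z hz
    have h2 := (abs_le.1 (abs_im_refl_sub_le ϑ z p)).1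
    have h3 := (abs_le.1 (abs_im_sub_le z p)).1
    exact ⟨by linarith, by linarith⟩
  have hsub' : ∀ z, ‖z - p‖ < d → z ∈ oSec ϑ := by
    intro z hz
    have h2 := (abs_le.1 (abs_im_refl_sub_le ϑ z p)).1
    have h3 := (abs_le.1 (abs_im_sub_le z p)).1
    exact ⟨by linarith, by linarith⟩
  have hq₁ := hq.add ((isQuad_normSq (f p - e)).translate p)
  set q₁ : ℂ → ℝ := fun z => q z + (f p - e) / 4 * ((z - p).re ^ 2 + (z - p).im ^ 2) with hq₁def
  have hvd : ∀ z, ‖z - p‖ ≤ d → |u z - q₁ z| ≤ M * K * d ^ (2 + α) := by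
    intro z hz
    have e1 := hqz z (hsub z hz) ((htri z).trans (by linarith))
    have e2 : |(f p - e) / 4 * ((z - p).re ^ 2 + (z - p).im ^ 2)| ≤
        (K * d ^ α + C₁ * K * (2 * d) ^ α) * d ^ 2 := by
      rw [norm_sq_eq, abs_mul, abs_div, abs_of_nonneg (sq_nonneg ‖z - p‖)]
      have h2 := H.holder p (oSec_subset_cSec ϑ hp) a hacS
      rw [hpa] at h2
      have h3 : |f p - e| ≤ K * d ^ α + C₁ * K * (2 * d) ^ α := by
        calc |f p - e| = |(f p - f a) - (e - f a)| := by ring_nf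
          _ ≤ _ := abs_sub _ _
          _ ≤ _ := add_le_add h2 he
      gcongr
      rw [abs_of_pos (by norm_num : (0 : ℝ) < 4)]
      linarith [abs_nonneg (f p - e)]
    rw [hq₁def]
    calc _ = |(u z - q z) - (f p - e) / 4 * ((z - p).re ^ 2 + (z - p).im ^ 2)| := by
          beta_reduce; ring_nf
      _ ≤ _ := abs_sub _ _
      _ ≤ _ := add_le_add e1 e2
      _ = _ := by
        rw [hM, Real.mul_rpow (by norm_num) hd0.le, Real.mul_rpow (by norm_num) hd0.le,
          rpow_two_add hd0 α]
        ring
  obtain ⟨c₀, c₁, c₂, hc⟩ := hcamp (fun z => u z - q₁ z) p d K hd0 hK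
    (fun ρ hρ0 hρR => by
      rw [rpow_two_add hρ0, ← mul_assoc]
      refine exists_polynomial_disc (v := fun z => u z - q₁ z) (p := p) hρ0
        (by positivity : 0 < K * ρ ^ α) ?_ ?_
      · refine (H.cont.sub hq₁.continuous.continuousOn).mono ?_
        intro z hz
        exact hsub z (by rw [mem_closedBall, dist_eq] at hz; linarith)
      · intro z hz
        rw [mem_ball, dist_eq] at hz
        have hzo := hsub' z (by linarith)
        refine ⟨_, ?_, (H.lap z hzo).sub (hq₁.hasLap z)⟩
        rw [add_sub_cancel]
        refine (H.holder z (oSec_subset_cSec ϑ hzo) p (oSec_subset_cSec ϑ hp)).trans ?_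
        gcongr)
    hvd r hr hdr.le
  refine ⟨_, _, hq₁.add ((isQuad_harmonic c₀ c₁ c₂).translate p), fun z hz hza => ?_⟩
  have := hc z hza
  rw [← sub_sub]
  refine this.trans ?_
  have h3 : 0 < M * K * r ^ (2 + α) := by positivity
  linarith

/-- Quadratic approximation at every point of the sector and every scale. -/
lemma exists_quadratic {ϑ α : ℝ} (h0 : 0 < ϑ) (h1 : ϑ < π / 2) (hα : 0 ≤ α) (hα1 : α < 1)
    (hαϑ : (2 + α) * ϑ < π) : ∃ C, 0 < C ∧ ∀ K f u, 0 < K → Hyp ϑ α K f u →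
      ∀ p ∈ oSec ϑ, ∀ r, 0 < r → ∃ q e, IsQuad q e ∧
        ∀ z ∈ cSec ϑ, ‖z - p‖ ≤ r → |u z - q z| ≤ C * K * r ^ (2 + α) := by
  obtain ⟨C, hC, h⟩ := exists_interior h0 h1 hα hα1 hαϑ
  refine ⟨C, hC, fun K f u hK H p hp r hr => ?_⟩
  rcases le_total p.im (refl ϑ p).im with hle | hle
  · exact h K f u hK H p hp hle r hr
  · obtain ⟨q, e, hq, hqz⟩ := h K _ _ hK H.refl (refl ϑ p) (refl_mem_oSec hp)
      (by rwa [refl_refl]) r hr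
    refine ⟨_, e, hq.reflect (norm_exp_ofReal_mul_I ϑ), fun z hz hzp => ?_⟩
    have := hqz (refl ϑ z) (refl_mem_cSec hz) (by rwa [refl_sub, norm_refl])
    rwa [refl_refl] at this

/-! ### Comparison of quadratic approximations and bounds on second derivatives -/

lemma refl_exp_half (ϑ : ℝ) : refl ϑ (cexp ((ϑ / 2 : ℝ) * I)) = cexp ((ϑ / 2 : ℝ) * I) := by
  rw [refl, ← exp_conj, ← Complex.exp_add]
  congr 1
  simp only [map_mul, conj_ofReal, conj_I]
  push_cast; ring

lemma add_mem_oSec {ϑ t : ℝ} {p w : ℂ}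
    (hp : p ∈ cSec ϑ) (hw : ‖w‖ < t * Real.sin (ϑ / 2)) :
    p + t * cexp ((ϑ / 2 : ℝ) * I) + w ∈ oSec ϑ := by
  have him : (cexp ((ϑ / 2 : ℝ) * I)).im = Real.sin (ϑ / 2) := exp_ofReal_mul_I_im _
  have hw1 := (abs_le.1 (abs_im_le_norm w)).1
  have hw2 := (abs_le.1 (abs_im_le_norm (refl ϑ w))).1
  rw [norm_refl] at hw2
  constructor
  · have := hp.1
    simp only [add_im, im_ofReal_mul, him]
    linarith
  · have h2 := hp.2
    have : refl ϑ (p + t * cexp ((ϑ / 2 : ℝ) * I) + w) =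
        refl ϑ p + t * refl ϑ (cexp ((ϑ / 2 : ℝ) * I)) + refl ϑ w := by
      simp [refl]; ring
    rw [this, refl_exp_half]
    simp only [add_im, im_ofReal_mul, him]
    linarith

lemma exists_sd_le {ϑ : ℝ} (h0 : 0 < ϑ) (h1 : ϑ < π / 2) : ∃ C, 0 < C ∧
    ∀ q e, IsQuad q e → ∀ p ∈ cSec ϑ, ∀ r A, 0 < r →
      (∀ z ∈ oSec ϑ, ‖z - p‖ ≤ r → |q z| ≤ A) → ∀ v : ℂ, ‖v‖ ≤ 2 → |sd q v| ≤ C * A / r ^ 2 := by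
  have hs : 0 < Real.sin (ϑ / 2) := Real.sin_pos_of_pos_of_lt_pi (by linarith) (by linarith)
  set S := Real.sin (ϑ / 2)
  have hS1 : S ≤ 1 := Real.sin_le_one _
  refine ⟨4 * (8 / S) ^ 2, by positivity, fun q e hq p hp r A hr hA v hv => ?_⟩
  set t := r * S / 8 with ht
  have ht0 : 0 < t := by positivity
  have hbd : ∀ w : ℂ, ‖w‖ ≤ 2 * t → |q (p + (r / 2 : ℝ) * cexp ((ϑ / 2 : ℝ) * I) + w)| ≤ A := by
    intro w hw
    have hrS : r * S ≤ r := by nlinarith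
    apply hA _ (add_mem_oSec hp _)
    · calc _ = ‖((r / 2 : ℝ) : ℂ) * cexp ((ϑ / 2 : ℝ) * I) + w‖ := by ring_nf
        _ ≤ ‖((r / 2 : ℝ) : ℂ) * cexp ((ϑ / 2 : ℝ) * I)‖ + ‖w‖ := norm_add_le _ _
        _ = r / 2 + ‖w‖ := by
          rw [norm_mul, norm_exp_ofReal_mul_I, norm_real, Real.norm_of_nonneg (by positivity),
            mul_one]
        _ ≤ r := by linarith
    · have : 0 < r * S := by positivity
      change ‖w‖ < r / 2 * S
      linarith
  have htv : ‖(t : ℂ) * v‖ ≤ 2 * t := by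
    rw [norm_mul, norm_real, Real.norm_of_nonneg ht0.le]; nlinarith
  have e1 := hbd (t * v) htv
  have e2 := hbd (-(t * v)) (by rwa [norm_neg])
  have e3 := hbd 0 (by simp; positivity)
  rw [add_zero] at e3
  rw [← sub_eq_add_neg] at e2
  have h2 := hq.secondDiff (p + (r / 2 : ℝ) * cexp ((ϑ / 2 : ℝ) * I)) v t
  have h3 : |t ^ 2 * sd q v| ≤ 4 * A := by
    rw [← h2, abs_le]
    rw [abs_le] at e1 e2 e3
    constructor <;> linarith
  rw [abs_mul, abs_of_pos (by positivity : 0 < t ^ 2)] at h3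
  have h4 : 4 * (8 / S) ^ 2 * A / r ^ 2 = 4 * A / t ^ 2 := by
    rw [ht]; field_simp
  rw [h4, le_div_iff₀ (by positivity)]
  linarith

/-- `q` is a quadratic polynomial with constant Laplacian that approximates `u` up to `A` on the
part of the sector within distance `r` of `p`. -/
def Approx (ϑ : ℝ) (u : ℂ → ℝ) (p : ℂ) (r A : ℝ) (q : ℂ → ℝ) : Prop :=
  (∃ e, IsQuad q e) ∧ ∀ z ∈ oSec ϑ, ‖z - p‖ ≤ r → |u z - q z| ≤ A

lemma exists_sd_sub_le {ϑ : ℝ} (h0 : 0 < ϑ) (h1 : ϑ < π / 2) : ∃ C, 0 < C ∧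
    ∀ u p p' r r' A A' q q', p ∈ cSec ϑ → 0 < r → r + ‖p - p'‖ ≤ r' → Approx ϑ u p r A q →
      Approx ϑ u p' r' A' q' → ∀ v : ℂ, ‖v‖ ≤ 2 →
        |sd q v - sd q' v| ≤ C * (A + A') / r ^ 2 := by
  obtain ⟨C, hC, h⟩ := exists_sd_le h0 h1
  refine ⟨C, hC, ?_⟩
  rintro u p p' r r' A A' q q' hp hr hrr ⟨⟨e, hq⟩, ha⟩ ⟨⟨e', hq'⟩, ha'⟩ v hv
  rw [← sd_sub]
  refine h _ _ (hq.sub hq') p hp r (A + A') hr (fun z hz hzp => ?_) v hv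
  have e1 := ha z hz hzp
  have e2 := ha' z hz ((norm_sub_le_norm_sub_add_norm_sub z p p').trans (by linarith))
  calc |q z - q' z| = |(u z - q' z) - (u z - q z)| := by ring_nf
    _ ≤ _ := abs_sub _ _
    _ ≤ _ := by linarith

lemma exists_approx {ϑ α : ℝ} (h0 : 0 < ϑ) (h1 : ϑ < π / 2) (hα : 0 ≤ α) (hα1 : α < 1)
    (hαϑ : (2 + α) * ϑ < π) : ∃ C, 0 < C ∧ ∀ K f u, 0 < K → Hyp ϑ α K f u →
      ∀ p ∈ oSec ϑ, ∀ r, 0 < r → ∃ q, Approx ϑ u p r (C * K * r ^ α * r ^ 2) q := by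
  obtain ⟨C, hC, h⟩ := exists_quadratic h0 h1 hα hα1 hαϑ
  refine ⟨C, hC, fun K f u hK H p hp r hr => ?_⟩
  obtain ⟨q, e, hq, hb⟩ := h K f u hK H p hp r hr
  refine ⟨q, ⟨e, hq⟩, fun z hz hzp => ?_⟩
  rw [mul_assoc _ _ (r ^ 2), ← rpow_two_add hr]
  exact hb z (oSec_subset_cSec ϑ hz) hzp

/-- Second difference quotients of approximating quadratics converge to those of `u`. -/
lemma tendsto_sd {ϑ α B : ℝ} (hα : 0 < α) {u : ℂ → ℝ} {p : ℂ} (hp : p ∈ oSec ϑ)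
    {q : ℕ → ℂ → ℝ} {ρ : ℕ → ℝ} (hρ0 : ∀ k, 0 < ρ k) (hρ : Tendsto ρ atTop (𝓝 0))
    (hq : ∀ k, Approx ϑ u p (ρ k) (B * ρ k ^ α * ρ k ^ 2) (q k)) {v : ℂ} (hv : ‖v‖ ≤ 2) {ℓ : ℝ}
    (h : HasSD u p v ℓ) : Tendsto (fun k => sd (q k) v) atTop (𝓝 ℓ) := by
  set t : ℕ → ℝ := fun k => ρ k / 2 with ht
  have ht0 : Tendsto t atTop (𝓝[>] 0) := by
    rw [tendsto_nhdsWithin_iff]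
    refine ⟨by simpa using hρ.div_const 2, Eventually.of_forall fun k => ?_⟩
    have := hρ0 k
    simp only [ht, mem_Ioi]; positivity
  have h2 := h.comp ht0
  have hbd : Tendsto (fun k => 16 * (B * ρ k ^ α)) atTop (𝓝 0) := by
    have : Tendsto (fun k => ρ k ^ α) atTop (𝓝 0) := by
      simpa [Real.zero_rpow hα.ne'] using hρ.rpow_const (p := α) (Or.inr hα.le)
    simpa using (this.const_mul B).const_mul 16
  have hmem : ∀ᶠ k in atTop, p + t k * v ∈ oSec ϑ ∧ p - t k * v ∈ oSec ϑ := by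
    have e1 : ∀ w : ℂ, ∀ᶠ k in atTop, p + t k * w ∈ oSec ϑ := fun w =>
      ((tendsto_line p w).comp (ht0.mono_right nhdsWithin_le_nhds)).eventually
        ((isOpen_oSec ϑ).mem_nhds hp)
    filter_upwards [e1 v, e1 (-v)] with k h1 h2
    exact ⟨h1, by rwa [mul_neg, ← sub_eq_add_neg] at h2⟩
  have hdiff := squeeze_zero_norm' (f := fun k => sd (q k) v -
      (u (p + t k * v) + u (p - t k * v) - 2 * u p) / t k ^ 2) (hmem.mono fun k hk => ?_) hbd
  · simpa using hdiff.add h2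
  · obtain ⟨⟨e, hqk⟩, ha⟩ := hq k
    have hk0 := hρ0 k
    have htk : 0 < t k := by simp only [ht]; positivity
    have htv : ‖(t k : ℂ) * v‖ ≤ ρ k := by
      rw [norm_mul, norm_real, Real.norm_of_nonneg htk.le]
      have : t k * 2 = ρ k := by simp [ht]
      nlinarith
    have a1 := abs_le.1 (ha _ hk.1 (by simpa using htv))
    have a2 := abs_le.1 (ha _ hk.2 (by simpa using htv))
    have a3 := abs_le.1 (ha _ hp (by simpa using hk0.le))
    have hsd := hqk.secondDiff p v (t k)
    have e1 : sd (q k) v - (u (p + t k * v) + u (p - t k * v) - 2 * u p) / t k ^ 2 =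
        (t k ^ 2 * sd (q k) v - (u (p + t k * v) + u (p - t k * v) - 2 * u p)) / t k ^ 2 := by
      field_simp
    rw [e1, ← hsd, Real.norm_eq_abs, abs_div, abs_of_pos (by positivity : 0 < t k ^ 2),
      div_le_iff₀ (by positivity)]
    have e2 : 16 * (B * ρ k ^ α) * t k ^ 2 = 4 * (B * ρ k ^ α * ρ k ^ 2) := by
      simp only [ht]; ring
    rw [e2, abs_le]
    constructor <;> linarith [a1.1, a1.2, a2.1, a2.2, a3.1, a3.2]

lemma two_rpow_le {α : ℝ} (hα1 : α < 1) : (2 : ℝ) ^ α ≤ 2 := by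
  simpa using Real.rpow_le_rpow_of_exponent_le (by norm_num : (1 : ℝ) ≤ 2) hα1.le

/-- The second derivatives are approximated by those of the quadratics. -/
lemma exists_approx_sd {ϑ α : ℝ} (h0 : 0 < ϑ) (h1 : ϑ < π / 2) (hα : 0 < α) (hα1 : α < 1)
    (hαϑ : (2 + α) * ϑ < π) : ∃ C, 0 < C ∧ ∀ K f u, 0 < K → Hyp ϑ α K f u →
      ∀ p ∈ oSec ϑ, ∀ r, 0 < r → ∃ q, Approx ϑ u p r (C * K * r ^ α * r ^ 2) q ∧
        ∀ v : ℂ, ‖v‖ ≤ 2 → ∀ ℓ, HasSD u p v ℓ → |sd q v - ℓ| ≤ C * K * r ^ α := by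
  obtain ⟨C, hC, h⟩ := exists_approx h0 h1 hα.le hα1 hαϑ
  obtain ⟨C₀, hC₀, hcmp⟩ := exists_sd_sub_le h0 h1
  set τ : ℝ := (1 / 2) ^ α with hτ
  have hτ0 : 0 < τ := by positivity
  have hτ1 : τ < 1 := Real.rpow_lt_one (by norm_num) (by norm_num) hα
  have hD : 0 < 9 * C₀ * C / τ / (1 - τ) := by
    have : 0 < 1 - τ := by linarith
    positivity
  refine ⟨C + 9 * C₀ * C / τ / (1 - τ), by positivity, fun K f u hK H p hp r hr => ?_⟩
  set ρ : ℕ → ℝ := fun k => r * (1 / 2) ^ k with hρ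
  have hρ0 : ∀ k, 0 < ρ k := fun k => by simp only [hρ]; positivity
  have hρα : ∀ k, ρ k ^ α = r ^ α * τ ^ k := fun k => by
    simp only [hρ, hτ]
    rw [Real.mul_rpow hr.le (by positivity), ← Real.rpow_natCast, ← Real.rpow_natCast,
      ← Real.rpow_mul (by norm_num), ← Real.rpow_mul (by norm_num), mul_comm α]
  choose q hq using fun k => h K f u hK H p hp (ρ k) (hρ0 k)
  have hρz : ρ 0 = r := by simp [hρ]
  refine ⟨q 0, ⟨(hq 0).1, fun z hz hzp => ((hq 0).2 z hz (by rwa [hρz])).trans ?_⟩,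
    fun v hv ℓ hℓ => ?_⟩
  · rw [hρz]
    gcongr
    linarith
  · have hlim := tendsto_sd hα hp hρ0 (by
      simpa only [mul_zero] using (tendsto_pow_atTop_nhds_zero_of_lt_one (by norm_num : (0 : ℝ) ≤ 1 / 2)
        (by norm_num)).const_mul r) hq hv hℓ
    have hgeo := dist_le_of_le_geometric_of_tendsto₀ τ (9 * C₀ * C / τ * K * r ^ α) hτ1
      (fun k => ?_) hlim
    · rw [Real.dist_eq] at hgeo
      refine hgeo.trans ?_
      have : 0 < C * K * r ^ α := by positivity
      have e : 9 * C₀ * C / τ * K * r ^ α / (1 - τ) =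
        9 * C₀ * C / τ / (1 - τ) * K * r ^ α := by ring
      rw [e]; linarith
    · rw [dist_comm, Real.dist_eq]
      have hk : ρ k = 2 * ρ (k + 1) := by simp only [hρ]; ring
      have := hcmp u p p (ρ (k + 1)) (ρ k) _ _ _ _ (oSec_subset_cSec ϑ hp) (hρ0 _)
        (by rw [sub_self, norm_zero]; linarith [hρ0 (k + 1)]) (hq (k + 1)) (hq k) v hv
      refine this.trans ?_
      rw [div_le_iff₀ (pow_pos (hρ0 _) 2), hρα, hρα, hk, pow_succ]
      have hX : 0 < C₀ * C * K * r ^ α * τ ^ k * ρ (k + 1) ^ 2 := by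
        have := hρ0 (k + 1)
        positivity
      have e1 : C₀ * (C * K * (r ^ α * (τ ^ k * τ)) * ρ (k + 1) ^ 2 +
          C * K * (r ^ α * τ ^ k) * (2 * ρ (k + 1)) ^ 2) =
          (C₀ * C * K * r ^ α * τ ^ k * ρ (k + 1) ^ 2) * (τ + 4) := by ring
      have e2 : 9 * C₀ * C / τ * K * r ^ α * τ ^ k * ρ (k + 1) ^ 2 =
          (C₀ * C * K * r ^ α * τ ^ k * ρ (k + 1) ^ 2) * (9 / τ) := by field_simp
      rw [e1, e2]
      have e3 : 9 ≤ 9 / τ := by rw [le_div_iff₀ hτ0]; linarith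
      gcongr
      linarith

/-- Hölder continuity of the second derivatives. -/
lemma exists_holder {ϑ α : ℝ} (h0 : 0 < ϑ) (h1 : ϑ < π / 2) (hα : 0 < α) (hα1 : α < 1)
    (hαϑ : (2 + α) * ϑ < π) : ∃ C, 0 < C ∧ ∀ K f u, 0 < K → Hyp ϑ α K f u →
      ∀ p ∈ oSec ϑ, ∀ p' ∈ oSec ϑ, p ≠ p' → ∀ v : ℂ, ‖v‖ ≤ 2 → ∀ ℓ ℓ', HasSD u p v ℓ →
        HasSD u p' v ℓ' → |ℓ - ℓ'| ≤ C * K * ‖p - p'‖ ^ α := by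
  obtain ⟨C, hC, h⟩ := exists_approx_sd h0 h1 hα hα1 hαϑ
  obtain ⟨C₀, hC₀, hcmp⟩ := exists_sd_sub_le h0 h1
  refine ⟨3 * C + 9 * C₀ * C, by positivity, fun K f u hK H p hp p' hp' hne v hv ℓ ℓ' hℓ hℓ' => ?_⟩
  have hs : 0 < ‖p - p'‖ := norm_pos_iff.2 (sub_ne_zero.2 hne)
  set s := ‖p - p'‖
  obtain ⟨q, hq, hqs⟩ := h K f u hK H p hp s hs
  obtain ⟨q', hq', hqs'⟩ := h K f u hK H p' hp' (2 * s) (by positivity)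
  have e1 := hqs v hv ℓ hℓ
  have e2 := hqs' v hv ℓ' hℓ'
  have e3 := hcmp u p p' s (2 * s) _ _ _ _ (oSec_subset_cSec ϑ hp) hs (by linarith) hq hq' v hv
  rw [Real.mul_rpow (by norm_num) hs.le] at e2 e3
  have e4 : C₀ * (C * K * s ^ α * s ^ 2 + C * K * (2 ^ α * s ^ α) * (2 * s) ^ 2) / s ^ 2 =
      C₀ * C * K * s ^ α * (1 + 4 * 2 ^ α) := by field_simp; ring
  rw [e4] at e3
  have h2 := two_rpow_le hα1
  have hX : 0 < C * K * s ^ α := by positivity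
  have e5 : C * K * (2 ^ α * s ^ α) ≤ 2 * (C * K * s ^ α) := by nlinarith
  have e6 : C₀ * C * K * s ^ α * (1 + 4 * 2 ^ α) ≤ 9 * C₀ * (C * K * s ^ α) := by
    have : 0 < C₀ * (C * K * s ^ α) := by positivity
    nlinarith
  rw [abs_le] at *
  constructor <;> linarith [e1.1, e1.2, e2.1, e2.2, e3.1, e3.2]

lemma exists_nat_pow_ge {x : ℝ} (hx : 0 ≤ x) :
    ∃ N : ℕ, x ≤ 2 ^ N ∧ (N : ℝ) ≤ 4 * Real.log (2 + x) := by
  refine ⟨⌈Real.logb 2 (2 + x)⌉₊, ?_, ?_⟩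
  · have h := Nat.le_ceil (Real.logb 2 (2 + x))
    rw [Real.logb_le_iff_le_rpow (by norm_num) (by linarith), Real.rpow_natCast] at h
    linarith
  · have hl2 := Real.log_two_gt_d9
    have hlog : Real.log 2 ≤ Real.log (2 + x) := Real.log_le_log (by norm_num) (by linarith)
    have h := Nat.ceil_lt_add_one (a := Real.logb 2 (2 + x))
      (Real.logb_nonneg (by norm_num) (by linarith))
    have h2 : Real.logb 2 (2 + x) ≤ 2 * Real.log (2 + x) := by
      rw [Real.logb, div_le_iff₀ (by linarith)]
      nlinarith
    linarith

/-- Logarithmic bound on the second derivatives. -/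
lemma exists_log_bound {ϑ α : ℝ} (h0 : 0 < ϑ) (h1 : ϑ < π / 2) (hα : 0 < α) (hα1 : α < 1)
    (hαϑ : (2 + α) * ϑ < π) : ∃ C, 0 < C ∧ ∀ K F f u, 0 < K → 0 < F → Hyp ϑ α K f u →
      Hyp ϑ 0 F f u → |f 0| ≤ F → ∀ p ∈ oSec ϑ, ∀ v : ℂ, ‖v‖ ≤ 2 → ∀ ℓ, HasSD u p v ℓ →
        |ℓ| ≤ C * K + C * F * Real.log (2 + ‖p‖) := by
  have hcos : 0 < Real.cos ϑ := Real.cos_pos_of_mem_Ioo ⟨by linarith, h1⟩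
  have h0ϑ : (2 + (0 : ℝ)) * ϑ < π := by linarith
  obtain ⟨C, hC, h⟩ := exists_approx_sd h0 h1 hα hα1 hαϑ
  obtain ⟨C', hC', h'⟩ := exists_approx h0 h1 le_rfl one_pos h0ϑ
  obtain ⟨C₁, hC₁, hcor⟩ := exists_corner h0 h1 le_rfl h0ϑ
  obtain ⟨C₀, hC₀, hcmp⟩ := exists_sd_sub_le h0 h1
  obtain ⟨C₂, hC₂, hsd⟩ := exists_sd_le h0 h1
  set G := 4 * (1 / (2 * Real.cos ϑ) + C₁) with hG
  set D := C₀ * C' + C₂ * (G + C') with hD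
  have hG0 : 0 < G := by positivity
  refine ⟨C + C₀ * C + 20 * C₀ * C' + 2 * D, by positivity,
    fun K F f u hK hF H H' hf0 p hp v hv ℓ hℓ => ?_⟩
  have hpc := oSec_subset_cSec ϑ hp
  obtain ⟨N, hN1, hN2⟩ := exists_nat_pow_ge (norm_nonneg p)
  obtain ⟨q, hq, hqs⟩ := h K f u hK H p hp 1 one_pos
  have e1 := hqs v hv ℓ hℓ
  choose Q hQ using fun k : ℕ => h' F f u hF H' p hp (2 ^ k) (by positivity)
  simp only [Real.rpow_zero, mul_one] at hQ
  simp only [Real.one_rpow, mul_one, one_pow] at hq e1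
  have e2 := hcmp u p p 1 (2 ^ 0) _ _ _ _ hpc one_pos (by simp) hq (hQ 0) v hv
  simp only [pow_zero, one_pow, mul_one, div_one] at e2
  have e3 : ∀ k : ℕ, |sd (Q 0) v - sd (Q k) v| ≤ k * (5 * C₀ * C' * F) := by
    intro k
    induction k with
    | zero => simp
    | succ k ih =>
      have := hcmp u p p (2 ^ k) (2 ^ (k + 1)) _ _ _ _ hpc (by positivity)
        (by rw [sub_self, norm_zero, pow_succ]; linarith [pow_pos (two_pos : (0 : ℝ) < 2) k])
        (hQ k) (hQ (k + 1)) v hv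
      have e : C₀ * (C' * F * (2 ^ k) ^ 2 + C' * F * (2 ^ (k + 1)) ^ 2) / (2 ^ k) ^ 2 =
          5 * C₀ * C' * F := by rw [pow_succ (2 : ℝ) k]; field_simp; ring
      rw [e] at this
      push_cast
      rw [abs_le] at *
      constructor <;> linarith [this.1, this.2, ih.1, ih.2]
  obtain ⟨⟨e, hQN⟩, hQN'⟩ := hQ N
  have e4 := hsd (Q N) e hQN p hpc (2 ^ N) ((G + C') * F * (2 ^ N) ^ 2) (by positivity)
    (fun z hz hzp => by
      have a1 := hQN' z hz hzp
      have a2 := hcor F f u hF H' z (oSec_subset_cSec ϑ hz)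
      have a3 := abs_cornerQuad_le hcos (f 0) z
      have hzn : ‖z‖ ≤ 2 * 2 ^ N := by
        calc ‖z‖ = ‖(z - p) + p‖ := by ring_nf
          _ ≤ _ := norm_add_le _ _
          _ ≤ _ := by linarith
      have a4 : |f 0| / (2 * Real.cos ϑ) * ‖z‖ ^ 2 ≤
          F / (2 * Real.cos ϑ) * (2 * 2 ^ N) ^ 2 := by gcongr
      have a5 : C₁ * F * ‖z‖ ^ 2 ≤ C₁ * F * (2 * 2 ^ N) ^ 2 := by gcongr
      rw [add_zero, Real.rpow_two] at a2
      have a6 : (G + C') * F * (2 ^ N) ^ 2 = F / (2 * Real.cos ϑ) * (2 * 2 ^ N) ^ 2 +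
        C₁ * F * (2 * 2 ^ N) ^ 2 + C' * F * (2 ^ N) ^ 2 := by rw [hG]; ring
      rw [a6]
      rw [abs_le] at *
      constructor <;> linarith [a1.1, a1.2, a2.1, a2.2, a3.1, a3.2]) v hv
  have e5 : C₂ * ((G + C') * F * (2 ^ N) ^ 2) / (2 ^ N) ^ 2 = C₂ * (G + C') * F := by
    field_simp
  rw [e5] at e4
  have e6 := e3 N
  have hl2 := Real.log_two_gt_d9
  have hlog : Real.log 2 ≤ Real.log (2 + ‖p‖) :=
    Real.log_le_log (by norm_num) (by linarith [norm_nonneg p])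
  have e7 : N * (5 * C₀ * C' * F) ≤ 20 * C₀ * C' * F * Real.log (2 + ‖p‖) := by
    have : 0 < C₀ * C' * F := by positivity
    nlinarith
  have e8 : D * F ≤ 2 * D * F * Real.log (2 + ‖p‖) := by
    have : 0 < D * F := by positivity
    nlinarith
  have e9 : 0 < (C + C₀ * C) * F * Real.log (2 + ‖p‖) := by
    have : 0 < Real.log (2 + ‖p‖) := by linarith
    positivity
  have e10 : 0 < (20 * C₀ * C' + 2 * D) * K := by positivity
  have e11 : C₀ * (C * K + C' * F) + C₂ * (G + C') * F = C₀ * C * K + D * F := by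
    rw [hD]; ring
  have tri : |ℓ| ≤ C * K + C₀ * (C * K + C' * F) + N * (5 * C₀ * C' * F) +
      C₂ * (G + C') * F := by
    rw [abs_le] at *
    constructor <;> linarith [e1.1, e1.2, e2.1, e2.2, e4.1, e4.2, e6.1, e6.2]
  linarith

/-! ### Twice differentiable functions -/

lemma hess_eq {u : ℂ → ℝ} {z : ℂ} (h : DifferentiableAt ℝ (fderiv ℝ u) z) (v₁ v₂ : ℂ) :
    hess u v₁ v₂ z = fderiv ℝ (fderiv ℝ u) z v₂ v₁ := by
  have := ((ContinuousLinearMap.apply ℝ ℝ v₁).hasFDerivAt (x := fderiv ℝ u z)).comp z h.hasFDerivAt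
  rw [hess]
  erw [this.fderiv]
  rfl

section C2

variable {u : ℂ → ℝ} {z : ℂ}

lemma differentiableAt_fderiv (h : ContDiffAt ℝ 2 u z) : DifferentiableAt ℝ (fderiv ℝ u) z :=
  (h.fderiv_right (m := 1) (by norm_num)).differentiableAt (by norm_num)

lemma hasSD_hess (h : ContDiffAt ℝ 2 u z) (v : ℂ) : HasSD u z v (hess u v v z) := by
  have hl : ∀ t : ℝ, HasDerivAt (fun t : ℝ => z + t * v) v t := fun t => by
    simpa using ((hasDerivAt_id t).ofReal_comp.mul_const v).const_add z
  have hev : ∀ᶠ w in 𝓝 z, ContDiffAt ℝ 2 u w := h.eventually (by simp)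
  apply hasSD_of_line (g' := fun t : ℝ => fderiv ℝ u (z + t * v) v)
  · filter_upwards [(tendsto_line z v).eventually hev] with t ht
    exact (ht.differentiableAt (by norm_num)).hasFDerivAt.comp_hasDerivAt t (hl t)
  · have hd : DifferentiableAt ℝ (fun w => fderiv ℝ u w v) (z + ((0 : ℝ) : ℂ) * v) := by
      simpa using (differentiableAt_fderiv h).clm_apply (differentiableAt_const v)
    have h2 := hd.hasFDerivAt.comp_hasDerivAt (0 : ℝ) (hl 0)
    simp only [ofReal_zero, zero_mul, add_zero] at h2
    exact h2

lemma hess_polar (h : ContDiffAt ℝ 2 u z) :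
    hess u 1 I z = (hess u (1 + I) (1 + I) z - hess u 1 1 z - hess u I I z) / 2 ∧
    hess u I 1 z = (hess u (1 + I) (1 + I) z - hess u 1 1 z - hess u I I z) / 2 := by
  have hd := differentiableAt_fderiv h
  have hs := (h.isSymmSndFDerivAt (by simp)).eq 1 I
  simp only [hess_eq hd, map_add, add_apply]
  constructor <;> linarith

lemma hasLap_lap (h : ContDiffAt ℝ 2 u z) : HasLap u z (lap u z) := by
  apply hasLap_of_hasSD
  intro v hv
  refine ⟨_, _, hasSD_hess h v, hasSD_hess h (I * v), ?_⟩
  have hd := differentiableAt_fderiv h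
  have hs := (h.isSymmSndFDerivAt (by simp)).eq 1 I
  have hl : lap u z = hess u 1 1 z + hess u I I z := rfl
  have key : ∀ w : ℂ, hess u w w z = w.re ^ 2 * hess u 1 1 z +
      2 * (w.re * w.im * fderiv ℝ (fderiv ℝ u) z 1 I) + w.im ^ 2 * hess u I I z := by
    intro w
    have h1 : w.re • (1 : ℂ) + w.im • I = w := by simp [re_add_im]
    have h2 : hess u w w z = fderiv ℝ (fderiv ℝ u) z (w.re • (1 : ℂ) + w.im • I)
        (w.re • (1 : ℂ) + w.im • I) := by rw [h1, hess_eq hd]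
    rw [h2]
    simp only [hess_eq hd, map_add, map_smul, add_apply, smul_apply, smul_eq_mul, hs]
    ring
  have h3 := norm_sq_eq v
  rw [hv] at h3
  rw [key v, key (I * v), hl, I_mul_re, I_mul_im]
  linear_combination (hess u 1 1 z + hess u I I z) * h3

end C2

lemma norm_one_add_I_le : ‖(1 + I : ℂ)‖ ≤ 2 := (norm_add_le _ _).trans (by norm_num)

/-- Bounds for second directional derivatives give bounds for the Hessian entries. -/
lemma abs_hess_le {u : ℂ → ℝ} {z : ℂ} (h : ContDiffAt ℝ 2 u z) {X : ℝ}
    (hX : ∀ v : ℂ, ‖v‖ ≤ 2 → |hess u v v z| ≤ X) {v₁ v₂ : ℂ} (h₁ : v₁ ∈ ({1, I} : Set ℂ))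
    (h₂ : v₂ ∈ ({1, I} : Set ℂ)) : |hess u v₁ v₂ z| ≤ 2 * X := by
  have e1 := abs_le.1 (hX 1 (by simp))
  have e2 := abs_le.1 (hX I (by simp))
  have e3 := abs_le.1 (hX (1 + I) norm_one_add_I_le)
  obtain ⟨p1, p2⟩ := hess_polar h
  rcases h₁ with rfl | rfl <;> rcases h₂ with rfl | rfl <;>
    rw [abs_le] <;> constructor <;> linarith

lemma abs_hess_sub_le {u : ℂ → ℝ} {z w : ℂ} (h : ContDiffAt ℝ 2 u z) (h' : ContDiffAt ℝ 2 u w)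
    {X : ℝ} (hX : ∀ v : ℂ, ‖v‖ ≤ 2 → |hess u v v z - hess u v v w| ≤ X) {v₁ v₂ : ℂ}
    (h₁ : v₁ ∈ ({1, I} : Set ℂ)) (h₂ : v₂ ∈ ({1, I} : Set ℂ)) :
    |hess u v₁ v₂ z - hess u v₁ v₂ w| ≤ 2 * X := by
  have e1 := abs_le.1 (hX 1 (by simp))
  have e2 := abs_le.1 (hX I (by simp))
  have e3 := abs_le.1 (hX (1 + I) norm_one_add_I_le)
  obtain ⟨p1, p2⟩ := hess_polar h
  obtain ⟨p1', p2'⟩ := hess_polar h'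
  rcases h₁ with rfl | rfl <;> rcases h₂ with rfl | rfl <;>
    rw [abs_le] <;> constructor <;> linarith

/-! ### The sector and the Hölder norms of the statement -/

lemma sector_eq {β : ℝ} (hβ0 : 0 < β) (hβ : β < 1 / 2) : Sector β = oSec (β * π) := by
  ext z
  rw [mem_oSec_iff (mul_pos hβ0 Real.pi_pos) (by nlinarith [Real.pi_pos])]
  rfl

lemma closure_oSec {ϑ : ℝ} (h0 : 0 < ϑ) (h1 : ϑ < π / 2) : closure (oSec ϑ) = cSec ϑ := by
  apply (closure_minimal (oSec_subset_cSec ϑ) (isClosed_cSec ϑ)).antisymm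
  intro z hz
  have hs : 0 < Real.sin (ϑ / 2) := Real.sin_pos_of_pos_of_lt_pi (by linarith) (by linarith)
  have ht : Tendsto (fun t : ℝ => z + t * cexp ((ϑ / 2 : ℝ) * I)) (𝓝[>] 0) (𝓝 z) :=
    (tendsto_line z _).mono_left nhdsWithin_le_nhds
  refine mem_closure_of_tendsto ht ?_
  filter_upwards [self_mem_nhdsWithin] with t ht0
  have := add_mem_oSec (t := t) (w := 0) hz (by rw [norm_zero]; exact mul_pos ht0 hs)
  rwa [add_zero] at this

lemma abs_le_of_supNormC_le {D : Set ℂ} {f : ℂ → ℝ} (h : supNormC D f ≠ ⊤) {z : ℂ}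
    (hz : z ∈ D) : |f z| ≤ (supNormC D f).toReal := by
  have h1 : (‖f z‖₊ : ℝ≥0∞) ≤ supNormC D f :=
    le_iSup (fun z : D => (‖f (z : ℂ)‖₊ : ℝ≥0∞)) ⟨z, hz⟩
  have := ENNReal.toReal_mono h h1
  simpa using this

lemma abs_sub_le_of_holderSemiC {α : ℝ} {D : Set ℂ} {f : ℂ → ℝ} (h : holderSemiC α D f ≠ ⊤)
    {z w : ℂ} (hz : z ∈ D) (hw : w ∈ D) (hzw : z ≠ w) :
    |f z - f w| ≤ (holderSemiC α D f).toReal * ‖z - w‖ ^ α := by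
  have h1 : (‖f z - f w‖₊ : ℝ≥0∞) / ENNReal.ofReal (‖z - w‖ ^ α) ≤ holderSemiC α D f :=
    le_iSup (fun p : {q : D × D // (q.1 : ℂ) ≠ (q.2 : ℂ)} =>
      (‖f (p.1.1 : ℂ) - f (p.1.2 : ℂ)‖₊ : ℝ≥0∞) /
        ENNReal.ofReal (‖(p.1.1 : ℂ) - (p.1.2 : ℂ)‖ ^ α)) ⟨(⟨z, hz⟩, ⟨w, hw⟩), hzw⟩
  have hn : 0 < ‖z - w‖ := norm_pos_iff.2 (sub_ne_zero.2 hzw)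
  have hp : 0 < ‖z - w‖ ^ α := by positivity
  have := ENNReal.toReal_mono h h1
  rw [ENNReal.toReal_div, ENNReal.toReal_ofReal hp.le, div_le_iff₀ hp] at this
  simpa using this

lemma holderSemiC_le {α : ℝ} {D : Set ℂ} {f : ℂ → ℝ} {X : ℝ}
    (h : ∀ z ∈ D, ∀ w ∈ D, z ≠ w → |f z - f w| ≤ X * ‖z - w‖ ^ α) :
    holderSemiC α D f ≤ ENNReal.ofReal X := by
  refine iSup_le ?_
  rintro ⟨⟨⟨z, hz⟩, ⟨w, hw⟩⟩, hzw⟩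
  have hn : 0 < ‖z - w‖ := norm_pos_iff.2 (sub_ne_zero.2 hzw)
  have hp : 0 ≤ ‖z - w‖ ^ α := by positivity
  apply ENNReal.div_le_of_le_mul
  rw [← ENNReal.ofReal_mul' hp, ← enorm_eq_nnnorm, ← ofReal_norm]
  exact ENNReal.ofReal_le_ofReal (h z hz w hw hzw)

/-- A bound on the open sector extends to the closed one by Hölder continuity. -/
lemma abs_le_on_cSec {ϑ α T S : ℝ} (h0 : 0 < ϑ) (h1 : ϑ < π / 2) (hα : 0 < α) {f : ℂ → ℝ}
    (hT : ∀ z ∈ cSec ϑ, ∀ w ∈ cSec ϑ, |f z - f w| ≤ T * ‖z - w‖ ^ α)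
    (hS : ∀ z ∈ oSec ϑ, |f z| ≤ S) {z : ℂ} (hz : z ∈ cSec ϑ) : |f z| ≤ S := by
  have hs : 0 < Real.sin (ϑ / 2) := Real.sin_pos_of_pos_of_lt_pi (by linarith) (by linarith)
  have hlim : Tendsto (fun t : ℝ => S + T * t ^ α) (𝓝[>] 0) (𝓝 S) := by
    have : Tendsto (fun t : ℝ => t ^ α) (𝓝 0) (𝓝 0) := by
      simpa [Real.zero_rpow hα.ne'] using tendsto_id.rpow_const (p := α) (x := (0 : ℝ)) (Or.inr hα.le)
    simpa using ((this.const_mul T).const_add S).mono_left nhdsWithin_le_nhds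
  refine ge_of_tendsto hlim ?_
  filter_upwards [self_mem_nhdsWithin] with t ht
  have ht0 : 0 < t := ht
  have hw := add_mem_oSec (t := t) (w := 0) hz (by rw [norm_zero]; exact mul_pos ht hs)
  rw [add_zero] at hw
  have e1 := hT z hz _ (oSec_subset_cSec ϑ hw)
  have e2 := hS _ hw
  rw [sub_add_cancel_left, norm_neg, norm_mul, norm_exp_ofReal_mul_I, norm_real,
    Real.norm_of_nonneg ht0.le, mul_one] at e1
  rw [abs_le] at *
  constructor <;> linarith [e1.1, e1.2, e2.1, e2.2]

lemma growth_of_log {C₀ m ε : ℝ} (hm : 2 < m) (hε : 0 < ε) :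
    ∀ᶠ ρ in atTop, C₀ * ρ ^ 2 * Real.log (Real.exp 1 + ρ) ≤ ε * ρ ^ m := by
  set δ := (m - 2) / 2 with hδ
  have hδ0 : 0 < δ := by rw [hδ]; linarith
  have h := (tendsto_rpow_atTop hδ0).eventually_ge_atTop (|C₀| * (2 ^ δ / δ) / ε)
  filter_upwards [h, eventually_gt_atTop 0, eventually_ge_atTop (Real.exp 1)] with ρ hρ h0 he
  have hlog : Real.log (Real.exp 1 + ρ) ≤ 2 ^ δ / δ * ρ ^ δ := by
    have hexp := Real.exp_pos 1
    refine (Real.log_le_rpow_div (by positivity) hδ0).trans ?_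
    rw [div_mul_eq_mul_div, ← Real.mul_rpow (by norm_num) h0.le]
    gcongr
    linarith
  have hlog0 : 0 ≤ Real.log (Real.exp 1 + ρ) := by
    apply Real.log_nonneg
    linarith [Real.add_one_le_exp 1]
  have hm2 : ρ ^ m = ρ ^ δ * ρ ^ δ * ρ ^ 2 := by
    rw [← Real.rpow_natCast, ← Real.rpow_add h0, ← Real.rpow_add h0]
    congr 1
    push_cast; rw [hδ]; ring
  rw [div_le_iff₀ hε] at hρ
  have h3 : 0 < ρ ^ δ := by positivity
  calc C₀ * ρ ^ 2 * Real.log (Real.exp 1 + ρ)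
      ≤ |C₀| * ρ ^ 2 * (2 ^ δ / δ * ρ ^ δ) := by
        gcongr
        exact le_abs_self C₀
    _ = (|C₀| * (2 ^ δ / δ)) * (ρ ^ δ * ρ ^ 2) := by ring
    _ ≤ (ρ ^ δ * ε) * (ρ ^ δ * ρ ^ 2) := by gcongr
    _ = _ := by rw [hm2]; ring

lemma Hyp.of_holder {ϑ α α' K K' : ℝ} {f u : ℂ → ℝ} (H : Hyp ϑ α K f u)
    (h : ∀ z ∈ cSec ϑ, ∀ w ∈ cSec ϑ, |f z - f w| ≤ K' * ‖z - w‖ ^ α') : Hyp ϑ α' K' f u :=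
  { H with holder := h }

/-- Hölder bound with a smaller exponent, for bounded functions. -/
lemma holder_of_le {α α' T d a b : ℝ} (hα' : 0 ≤ α') (hα : α' ≤ α) (hd : 0 < d)
    (ha : |a| ≤ T) (hb : |b| ≤ T) (hab : |a - b| ≤ T * d ^ α) : |a - b| ≤ 2 * T * d ^ α' := by
  have hT : 0 ≤ T := (abs_nonneg a).trans ha
  rcases le_total d 1 with h1 | h1
  · have : d ^ α ≤ d ^ α' := Real.rpow_le_rpow_of_exponent_ge hd h1 hα
    have h2 : 0 ≤ T * d ^ α' := by positivity
    calc _ ≤ T * d ^ α := hab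
      _ ≤ T * d ^ α' := by gcongr
      _ ≤ _ := by linarith
  · have : 1 ≤ d ^ α' := Real.one_le_rpow h1 hα'
    calc |a - b| ≤ |a| + |b| := abs_sub _ _
      _ ≤ 2 * T * 1 := by linarith
      _ ≤ _ := by gcongr

end SectorSchauder

/-- **Uniform Hölder estimate for the Dirichlet Laplacian on a sector (Lemma 3.7).**
For `0 < β < 1/2`, `0 < α < 1`, there is `C = C(α,β) > 0` such that for every `f` with
`‖f‖_{C^α(Ω̄_β)} < ∞` and the unique `Ψ` with `ΔΨ = f` in `Ω_β`, `Ψ = 0` on `∂Ω_β` and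
`|Ψ(x)| ≤ C₀ |x|² ln(e+|x|)`:
(i) `|∇²Ψ(x)| ≤ C ln(2+|x|) ‖f‖_{L^∞(Ω_β)} + C ‖f‖_{C^α(Ω̄_β)}` on `Ω_β`, and
(ii) if moreover `α < 1/β - 2`, then `sup_{x≠y} |∇²Ψ(x) - ∇²Ψ(y)|/|x-y|^α ≤ C ‖f‖_{C^α(Ω̄_β)}`. -/
theorem sector_uniform_holder_estimate (β α : ℝ) (hβ0 : 0 < β) (hβ : β < 1/2)
    (hα0 : 0 < α) (hα1 : α < 1) :
    ∃ C : ℝ, 0 < C ∧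
      ∀ (f Ψ : ℂ → ℝ),
      unifNormC α (closure (Sector β)) f < ⊤ →
      ContinuousOn Ψ (closure (Sector β)) →
      ContDiffOn ℝ 2 Ψ (Sector β) →
      (∀ z ∈ Sector β, lap Ψ z = f z) →
      (∀ z ∈ frontier (Sector β), Ψ z = 0) →
      (∃ C₀ : ℝ, ∀ z ∈ Sector β, |Ψ z| ≤ C₀ * ‖z‖ ^ 2 * Real.log (Real.exp 1 + ‖z‖)) →
      ∀ v₁ ∈ ({1, Complex.I} : Set ℂ), ∀ v₂ ∈ ({1, Complex.I} : Set ℂ),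
        (∀ z ∈ Sector β,
          |hess Ψ v₁ v₂ z| ≤
            C * Real.log (2 + ‖z‖) * (supNormC (Sector β) f).toReal +
              C * (unifNormC α (closure (Sector β)) f).toReal) ∧
        (α < 1/β - 2 →
          holderSemiC α (Sector β) (hess Ψ v₁ v₂) ≤
            ENNReal.ofReal C * unifNormC α (closure (Sector β)) f) := by
  open SectorSchauder in
  set ϑ := β * π with hϑ
  have h0 : 0 < ϑ := mul_pos hβ0 Real.pi_pos
  have h1 : ϑ < π / 2 := by nlinarith [Real.pi_pos]
  have hangle : ∀ a : ℝ, a < 1 / β - 2 → (2 + a) * ϑ < π := by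
    intro a ha
    have h2 : (2 + a) * β < 1 := (lt_div_iff₀ hβ0).1 (by linarith)
    rw [hϑ]
    nlinarith [Real.pi_pos]
  have hβ2 : 0 < 1 / β - 2 := by
    have : 2 < 1 / β := by rw [lt_div_iff₀ hβ0]; linarith
    linarith
  set α' := min α ((1 / β - 2) / 2) with hα'
  have hα'0 : 0 < α' := lt_min hα0 (by linarith)
  have hα'α : α' ≤ α := min_le_left _ _
  obtain ⟨C₁, hC₁, hlog⟩ := exists_log_bound h0 h1 hα'0 (by linarith)
    (hangle α' ((min_le_right _ _).trans_lt (by linarith)))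
  obtain ⟨C₂, hC₂, hhol⟩ : ∃ C₂, 0 < C₂ ∧ (α < 1 / β - 2 → ∀ K f u, 0 < K → Hyp ϑ α K f u →
      ∀ p ∈ oSec ϑ, ∀ p' ∈ oSec ϑ, p ≠ p' → ∀ v : ℂ, ‖v‖ ≤ 2 → ∀ ℓ ℓ', HasSD u p v ℓ →
        HasSD u p' v ℓ' → |ℓ - ℓ'| ≤ C₂ * K * ‖p - p'‖ ^ α) := by
    by_cases hc : α < 1 / β - 2
    · obtain ⟨C, hC, h⟩ := exists_holder h0 h1 hα0 hα1 (hangle α hc)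
      exact ⟨C, hC, fun _ => h⟩
    · exact ⟨1, one_pos, fun h => absurd h hc⟩
  refine ⟨4 * C₁ + 2 * C₂, by positivity, ?_⟩
  rw [sector_eq hβ0 hβ, ← hϑ, closure_oSec h0 h1]
  intro f Ψ hnorm hcont hC2 hlap hzero hgrow v₁ hv₁ v₂ hv₂
  have hsup_top : supNormC (cSec ϑ) f ≠ ⊤ := (lt_of_le_of_lt le_self_add hnorm).ne
  have hsemi_top : holderSemiC α (cSec ϑ) f ≠ ⊤ := (lt_of_le_of_lt le_add_self hnorm).ne
  have hsup_top' : supNormC (oSec ϑ) f ≠ ⊤ := by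
    refine ne_top_of_le_ne_top hsup_top (iSup_le fun z => ?_)
    exact le_iSup (fun z : cSec ϑ => (‖f (z : ℂ)‖₊ : ℝ≥0∞)) ⟨z, oSec_subset_cSec ϑ z.2⟩
  set T := (unifNormC α (cSec ϑ) f).toReal with hT
  set S := (supNormC (oSec ϑ) f).toReal with hS
  have hTsum : T = (supNormC (cSec ϑ) f).toReal + (holderSemiC α (cSec ϑ) f).toReal :=
    ENNReal.toReal_add hsup_top hsemi_top
  have hT0 : 0 ≤ T := ENNReal.toReal_nonneg
  have hS0 : 0 ≤ S := ENNReal.toReal_nonneg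
  have hfT : ∀ z ∈ cSec ϑ, |f z| ≤ T := fun z hz => by
    have e1 := abs_le_of_supNormC_le hsup_top hz
    have e2 : 0 ≤ (holderSemiC α (cSec ϑ) f).toReal := ENNReal.toReal_nonneg
    linarith
  have hfα : ∀ z ∈ cSec ϑ, ∀ w ∈ cSec ϑ, |f z - f w| ≤ T * ‖z - w‖ ^ α := by
    intro z hz w hw
    rcases eq_or_ne z w with rfl | hne
    · simp [Real.zero_rpow hα0.ne']
    · refine (abs_sub_le_of_holderSemiC hsemi_top hz hw hne).trans ?_
      have e2 : 0 ≤ (supNormC (cSec ϑ) f).toReal := ENNReal.toReal_nonneg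
      gcongr
      linarith
  have hfα' : ∀ z ∈ cSec ϑ, ∀ w ∈ cSec ϑ, |f z - f w| ≤ 2 * T * ‖z - w‖ ^ α' := by
    intro z hz w hw
    rcases eq_or_ne z w with rfl | hne
    · simp [Real.zero_rpow hα'0.ne']
    · exact holder_of_le hα'0.le hα'α (norm_pos_iff.2 (sub_ne_zero.2 hne)) (hfT z hz) (hfT w hw)
        (hfα z hz w hw)
  have hfS : ∀ z ∈ cSec ϑ, |f z| ≤ S := fun z hz =>
    abs_le_on_cSec h0 h1 hα0 hfα (fun w hw => abs_le_of_supNormC_le hsup_top' hw) hz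
  have hcd : ∀ z ∈ oSec ϑ, ContDiffAt ℝ 2 Ψ z := fun z hz =>
    hC2.contDiffAt ((isOpen_oSec ϑ).mem_nhds hz)
  have hedge : ∀ z ∈ cSec ϑ, z.im = 0 ∨ (refl ϑ z).im = 0 → Ψ z = 0 := by
    intro z hz hzi
    apply hzero
    rw [frontier, closure_oSec h0 h1, (isOpen_oSec ϑ).interior_eq]
    refine ⟨hz, fun hzo => ?_⟩
    rcases hzi with h | h
    · exact hzo.1.ne' h
    · exact hzo.2.ne' h
  have H : Hyp ϑ α T f Ψ :=
    { cont := hcont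
      lap := fun z hz => by
        rw [← hlap z hz]; exact hasLap_lap (hcd z hz)
      zero := hedge
      holder := hfα
      growth := fun m hm ε hε => by
        obtain ⟨C₀, hC₀⟩ := hgrow
        filter_upwards [growth_of_log (C₀ := C₀) hm hε, Filter.eventually_gt_atTop 0]
          with ρ hρ hρ0 z hz hzρ
        by_cases hzo : z ∈ oSec ϑ
        · have := hC₀ z hzo
          rw [hzρ] at this
          exact this.trans hρ
        · rw [hedge z hz, abs_zero]
          · positivity
          · by_contra! hne
            exact hzo ⟨lt_of_le_of_ne hz.1 hne.1.symm, lt_of_le_of_ne hz.2 hne.2.symm⟩ }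
  constructor
  · intro z hz
    have hl : 0 < Real.log (2 + ‖z‖) := Real.log_pos (by linarith [norm_nonneg z])
    set l := Real.log (2 + ‖z‖)
    have main : ∀ η : ℝ, 0 < η → |hess Ψ v₁ v₂ z| ≤
        2 * (C₁ * (2 * T + η) + C₁ * (2 * S + η) * l) := by
      intro η hη
      refine abs_hess_le (hcd z hz) (fun v hv => ?_) hv₁ hv₂
      refine hlog (2 * T + η) (2 * S + η) f Ψ (by positivity) (by positivity)
        (H.of_holder fun z hz w hw => (hfα' z hz w hw).trans ?_)
        (H.of_holder fun z hz w hw => ?_) ?_ z hz v hv _ (hasSD_hess (hcd z hz) v)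
      · gcongr; linarith
      · rw [Real.rpow_zero, mul_one]
        have e1 := hfS z hz
        have e2 := hfS w hw
        exact (abs_sub _ _).trans (by linarith)
      · linarith [hfS 0 (zero_mem_cSec ϑ)]
    have hfin : |hess Ψ v₁ v₂ z| ≤ 4 * C₁ * l * S + 4 * C₁ * T := by
      apply le_of_forall_pos_le_add
      intro η hη
      refine (main (η / (2 * C₁ + 2 * C₁ * l)) (by positivity)).trans (le_of_eq ?_)
      field_simp
      ring
    have e1 : 0 ≤ C₂ * l * S := by positivity
    have e2 : 0 ≤ C₂ * T := by positivity
    linarith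
  · intro hαβ
    have hX : unifNormC α (cSec ϑ) f = ENNReal.ofReal T := (ENNReal.ofReal_toReal hnorm.ne).symm
    rw [hX, ← ENNReal.ofReal_mul (by positivity)]
    refine holderSemiC_le fun z hz w hw hzw => ?_
    have main : ∀ η : ℝ, 0 < η → |hess Ψ v₁ v₂ z - hess Ψ v₁ v₂ w| ≤
        2 * (C₂ * (T + η) * ‖z - w‖ ^ α) := by
      intro η hη
      refine abs_hess_sub_le (hcd z hz) (hcd w hw) (fun v hv => ?_) hv₁ hv₂
      refine hhol hαβ (T + η) f Ψ (by positivity)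
        (H.of_holder fun z hz w hw => (hfα z hz w hw).trans ?_) z hz w hw hzw v hv _ _
        (hasSD_hess (hcd z hz) v) (hasSD_hess (hcd w hw) v)
      gcongr; linarith
    have hn : 0 < ‖z - w‖ := norm_pos_iff.2 (sub_ne_zero.2 hzw)
    have hfin : |hess Ψ v₁ v₂ z - hess Ψ v₁ v₂ w| ≤ 2 * C₂ * T * ‖z - w‖ ^ α := by
      apply le_of_forall_pos_le_add
      intro η hη
      refine (main (η / (2 * C₂ * ‖z - w‖ ^ α)) (by positivity)).trans (le_of_eq ?_)
      field_simp
    refine hfin.trans ?_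
    gcongr
    linarith
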